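/- arXiv:1710.06694 — 2 statements merged into one kernel-verified Lean document; each statement's English description precedes it below -/
import Mathlib

section
/- Let Φ be an irreducible crystallographic root system of rank n, W the associated affine Weyl group with set of reflections T, W_0 = W_Φ the finite Weyl group, and p : W → W_0 the projection s_{α,k} ↦ s_α. Let w ∈ W be a quasi-Coxeter element for (W,T). Then for every reduced reflection factorization (s_{β_1,k_1},…,s_{β_{n+1},k_{n+1}}) ∈ Red_T(w), one has ⟨s_{β_1},…,s_{β_{n+1}}⟩ = W_0. -/
open scoped RealInnerProductSpace

noncomputable section

variable {V : Type*} [NormedAddCommGroup V] [InnerProductSpace ℝ V]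

/-- The coroot `α^∨ = 2α/(α|α)` of a vector `α`. -/
def coroot (α : V) : V := (2 / ⟪α, α⟫) • α

/-- The affine reflection `s_{α,k} : v ↦ v - ((v|α) - k)α^∨`, as a function. -/
def sAffFun (α : V) (k : ℝ) (v : V) : V := v - (⟪v, α⟫ - k) • coroot α

theorem sAffFun_involutive (α : V) (k : ℝ) : Function.Involutive (sAffFun α k) := by
  intro v
  by_cases h : α = 0
  · simp [sAffFun, coroot, h]
  · have h2 : ⟪α, α⟫ ≠ 0 := by
      intro hz
      exact h (inner_self_eq_zero.mp hz)
    have hr : ⟪coroot α, α⟫ = 2 := by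
      simp only [coroot, real_inner_smul_left]
      field_simp
    simp only [sAffFun, inner_sub_left, real_inner_smul_left, hr]
    have : ⟪v, α⟫ - (⟪v, α⟫ - k) * 2 - k = -(⟪v, α⟫ - k) := by ring
    rw [this, neg_smul, sub_neg_eq_add, sub_add_cancel]

/-- The affine reflection `s_{α,k}` as a permutation of `V`. -/
def sAff (α : V) (k : ℝ) : Equiv.Perm V :=
  Function.Involutive.toPerm _ (sAffFun_involutive α k)

/-- The translation `Tr(x) : v ↦ v + x`, as a function. -/
def trFun (x : V) (v : V) : V := v + x

/-- The translation `Tr(x) : v ↦ v + x`, as a permutation of `V`. -/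
def trPerm (x : V) : Equiv.Perm V := Equiv.addRight x

/-- A crystallographic (reduced) root system in a Euclidean space `V`. -/
structure IsCrystRootSystem (Φ : Set V) : Prop where
  finite : Φ.Finite
  nonempty : Φ.Nonempty
  ne_zero : ∀ α ∈ Φ, α ≠ 0
  spanning : Submodule.span ℝ Φ = ⊤
  refl_mem : ∀ α ∈ Φ, ∀ β ∈ Φ, sAffFun α 0 β ∈ Φ
  reduced : ∀ α ∈ Φ, ∀ c : ℝ, c • α ∈ Φ → c = 1 ∨ c = -1
  cryst : ∀ α ∈ Φ, ∀ β ∈ Φ, ∃ n : ℤ, 2 * ⟪β, α⟫ / ⟪α, α⟫ = (n : ℝ)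

/-- The (finite) Weyl group of `Φ`, generated by the reflections `s_α`. -/
def WeylGroup (Φ : Set V) : Subgroup (Equiv.Perm V) :=
  Subgroup.closure {g | ∃ α ∈ Φ, g = sAff α 0}

/-- The affine Weyl group of `Φ`, generated by all affine reflections `s_{α,k}`, `k ∈ ℤ`. -/
def AffWeylGroup (Φ : Set V) : Subgroup (Equiv.Perm V) :=
  Subgroup.closure {g | ∃ α ∈ Φ, ∃ k : ℤ, g = sAff α k}

/-- The set of reflections of the affine Weyl group. -/
def AffReflections (Φ : Set V) : Set (Equiv.Perm V) :=
  {g | ∃ α ∈ Φ, ∃ k : ℤ, g = sAff α k}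

/-- The coweight lattice `P(Φ^∨) = {x | (x|α) ∈ ℤ for all α ∈ Φ}`. -/
def coweightLattice (Φ : Set V) : Set V :=
  {x | ∀ α ∈ Φ, ∃ n : ℤ, ⟪x, α⟫ = (n : ℝ)}

/-- `Φ` is irreducible: it admits no decomposition into two nonempty orthogonal parts. -/
def IsIrreducibleRS (Φ : Set V) : Prop :=
  ∀ Φ₁ Φ₂ : Set V, Φ₁ ∪ Φ₂ = Φ → (∀ α ∈ Φ₁, ∀ β ∈ Φ₂, ⟪α, β⟫ = 0) →
    Φ₁ = ∅ ∨ Φ₂ = ∅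

section Hurwitz

variable {G : Type*} [Group G]

/-- One Hurwitz move: replace two adjacent entries `(a, b)` by `(a * b * a⁻¹, a)`. -/
def HurwitzMove (l l' : List G) : Prop :=
  ∃ (u v : List G) (a b : G),
    l = u ++ a :: b :: v ∧ l' = u ++ (a * b * a⁻¹) :: a :: v

/-- Hurwitz equivalence: two tuples are Hurwitz equivalent iff they lie in the same
orbit of the Hurwitz action of the braid group. -/
def HurwitzEquiv (l l' : List G) : Prop := Relation.EqvGen HurwitzMove l l'

/-- The reflection length `ℓ_T(w)` of `w` with respect to a generating set `T`. -/
noncomputable def reflLength (T : Set G) (w : G) : ℕ :=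
  sInf {k | ∃ l : List G, (∀ t ∈ l, t ∈ T) ∧ l.prod = w ∧ l.length = k}

/-- `l` is a reduced `T`-factorization of `w`, i.e. an element of `Red_T(w)`. -/
def IsRedFac (T : Set G) (w : G) (l : List G) : Prop :=
  (∀ t ∈ l, t ∈ T) ∧ l.prod = w ∧ l.length = reflLength T w

end Hurwitz


/-- `w` is a quasi-Coxeter element for the affine dual Coxeter system `(W,T)` of rank `n+1`
associated to `Φ`: some reduced reflection factorization of `w` of length `n+1` generates
the whole affine Weyl group. -/
def IsQuasiCoxeterAff (Φ : Set V) (n : ℕ) (w : Equiv.Perm V) : Prop :=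
  ∃ t : Fin (n + 1) → Equiv.Perm V,
    (∀ i, t i ∈ AffReflections Φ) ∧
    (List.ofFn t).prod = w ∧
    n + 1 = reflLength (AffReflections Φ) w ∧
    Subgroup.closure (Set.range t) = AffWeylGroup Φ


/-!
Let `t₁, …, tₙ₊₁` be reflections in affine roots `(αᵢ, mᵢ)` that generate `W` and multiply to `w`.
Homogenized to linear forms on `V × ℝ`, these affine roots form a basis; its dual basis consists of
coweights with integral heights, because `W` is generated by the `tᵢ`. The point dual to the first
affine root is fixed by all `tᵢ` except `t₁`, so `w` moves it by `± α₁^∨`; after cancelling `t₁` the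
same applies to the next factor. Now every factorization of `w` into reflections with linear parts
`s_β` moves coweights by elements of the lattice spanned by the `β^∨`. Hence that lattice contains
all `αᵢ^∨`, and these span the coroot lattice. Applied to weights instead of coweights, the argument
works modulo the lattice of long roots and shows that the `β` and the long roots span the root
lattice.

A nonzero element of the lattice spanned by a root system that is at most as long as every root is
itself a root. So, if `Ψ` is the root system of `⟨s_β⟩`, the statement on coroots puts the long
roots of `Φ` in `Ψ`, and then the statement on roots puts the short ones in `Ψ`.
-/

/-! ### Coroots and reflections -/

theorem inner_coroot_right (a v : V) : ⟪v, coroot a⟫ = 2 * ⟪v, a⟫ / ⟪a, a⟫ := by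
  rw [coroot, real_inner_smul_right]
  ring

theorem coroot_smul (c : ℝ) (a : V) : coroot (c • a) = c⁻¹ • coroot a := by
  rcases eq_or_ne c 0 with rfl | hc
  · simp [coroot]
  · simp only [coroot, real_inner_smul_left, real_inner_smul_right, smul_smul]
    congr 1
    field_simp

theorem inner_self_coroot (a : V) : ⟪coroot a, coroot a⟫ = 4 / ⟪a, a⟫ := by
  rcases eq_or_ne a 0 with rfl | ha
  · simp [coroot]
  · have := (real_inner_self_pos.mpr ha).ne'
    simp only [coroot, real_inner_smul_left, real_inner_smul_right]
    field_simp
    norm_num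

theorem inner_coroot_self {a : V} (ha : a ≠ 0) : ⟪coroot a, a⟫ = 2 := by
  rw [coroot, real_inner_smul_left, div_mul_cancel₀ _ (inner_self_ne_zero.mpr ha)]

theorem half_inner_self_smul_coroot {a : V} (ha : a ≠ 0) : (⟪a, a⟫ / 2) • coroot a = a := by
  have := (real_inner_self_pos.mpr ha).ne'
  rw [coroot, smul_smul, div_mul_div_cancel₀ two_ne_zero, div_self this, one_smul]

theorem coroot_involutive : Function.Involutive (coroot : V → V) := by
  intro a
  rcases eq_or_ne a 0 with rfl | ha
  · simp [coroot]
  · have := (real_inner_self_pos.mpr ha).ne'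
    rw [coroot, inner_self_coroot, coroot, smul_smul,
      show 2 / (4 / ⟪a, a⟫) * (2 / ⟪a, a⟫) = 1 by field_simp; norm_num, one_smul]

theorem coroot_ne_zero {a : V} (ha : a ≠ 0) : coroot a ≠ 0 :=
  smul_ne_zero (div_ne_zero two_ne_zero (real_inner_self_pos.mpr ha).ne') ha

theorem coroot_map (f : V ≃ₗᵢ[ℝ] V) (a : V) : coroot (f a) = f (coroot a) := by
  rw [coroot, coroot, f.inner_map_map, map_smul]

/-- The linear reflection `s_a` as an isometry, which gives access to the library of
orthogonal maps. It agrees with `sAff a 0`, also for `a = 0`, where both are the identity. -/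
abbrev rootRefl (a : V) : V ≃ₗᵢ[ℝ] V := (ℝ ∙ a)ᗮ.reflection

theorem rootRefl_apply (a v : V) : rootRefl a v = v - ⟪v, a⟫ • coroot a := by
  rw [Submodule.reflection_orthogonal_apply, Submodule.reflection_singleton_apply, neg_sub,
    RCLike.ofReal_real_eq_id, id, ← real_inner_self_eq_norm_sq, real_inner_comm, coroot, smul_smul,
    two_smul, ← add_smul]
  congr 2
  ring

theorem rootRefl_apply' (a v : V) : rootRefl a v = v - ⟪v, coroot a⟫ • a := by
  rw [rootRefl_apply, coroot, real_inner_smul_right, smul_smul, mul_comm]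

theorem rootRefl_coroot (a : V) : rootRefl (coroot a) = rootRefl a := by
  ext v
  rw [rootRefl_apply, coroot_involutive a, rootRefl_apply']

theorem inner_rootRefl_left (a v w : V) : ⟪rootRefl a v, w⟫ = ⟪v, rootRefl a w⟫ := by
  rw [LinearIsometryEquiv.inner_map_eq_flip, Submodule.reflection_symm]

theorem sAffFun_zero (a v : V) : sAffFun a 0 v = rootRefl a v := by
  rw [sAffFun, sub_zero, rootRefl_apply]

theorem sAff_rootRefl (a b : V) : sAff (rootRefl a b) 0 = sAff a 0 * sAff b 0 * sAff a 0 := by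
  ext v
  change sAffFun _ 0 v = sAffFun a 0 (sAffFun b 0 (sAffFun a 0 v))
  rw [sAffFun_zero, sAffFun_zero, sAffFun_zero, sAffFun_zero, rootRefl_apply b, map_sub, map_smul,
    Submodule.reflection_reflection, inner_rootRefl_left, ← coroot_map, ← rootRefl_apply]

theorem inner_multiset_sum (v : V) (s : Multiset V) : ⟪v, s.sum⟫ = (s.map (⟪v, ·⟫)).sum :=
  map_multiset_sum (innerₗ V v) s

theorem exists_mem_inner_ne_zero_of_multiset_sum {s : Multiset V} {v : V} (h : ⟪s.sum, v⟫ ≠ 0) :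
    ∃ b ∈ s, ⟪b, v⟫ ≠ 0 := by
  contrapose! h
  rw [real_inner_comm, inner_multiset_sum]
  refine Multiset.sum_eq_zero (Multiset.forall_mem_map_iff.mpr fun b hb => ?_)
  rw [real_inner_comm, h b hb]

/-! ### Lattices spanned by roots -/

/-- The axioms of `IsCrystRootSystem` without finiteness, nonemptiness and spanning, so that they
pass to reflection subsystems and to coroots. -/
structure IsRootSet (Ψ : Set V) : Prop where
  ne_zero : ∀ a ∈ Ψ, a ≠ 0
  rootRefl_mem : ∀ a ∈ Ψ, ∀ b ∈ Ψ, rootRefl a b ∈ Ψ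
  reduced : ∀ a ∈ Ψ, ∀ c : ℝ, c • a ∈ Ψ → c = 1 ∨ c = -1
  integral : ∀ a ∈ Ψ, ∀ b ∈ Ψ, ∃ n : ℤ, ⟪b, coroot a⟫ = n

/-- The roots in `Φ` whose reflections lie in `G`: the root system of the largest reflection
subgroup of `G`. -/
def rootsIn (Φ : Set V) (G : Subgroup (Equiv.Perm V)) : Set V := {a ∈ Φ | sAff a 0 ∈ G}

/-- The roots of maximal length; all of `Φ` if `Φ` is simply laced. -/
def longRoots (Φ : Set V) : Set V := {a ∈ Φ | ∀ b ∈ Φ, ⟪b, b⟫ ≤ ⟪a, a⟫}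

theorem IsCrystRootSystem.isRootSet {Φ : Set V} (hΦ : IsCrystRootSystem Φ) : IsRootSet Φ where
  ne_zero := hΦ.ne_zero
  rootRefl_mem a ha b hb := by simpa only [sAffFun_zero] using hΦ.refl_mem a ha b hb
  reduced := hΦ.reduced
  integral a ha b hb := by simpa only [inner_coroot_right] using hΦ.cryst a ha b hb

theorem IsCrystRootSystem.longRoots_nonempty {Φ : Set V} (hΦ : IsCrystRootSystem Φ) :
    (longRoots Φ).Nonempty := by
  obtain ⟨a, ha, hmax⟩ := Set.exists_max_image Φ (fun a => ⟪a, a⟫) hΦ.finite hΦ.nonempty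
  exact ⟨a, ha, hmax⟩

namespace IsRootSet

variable {Φ Ψ : Set V} {a b g : V}

theorem coroots (hΨ : IsRootSet Ψ) : IsRootSet (coroot '' Ψ) where
  ne_zero := by
    rintro _ ⟨a, ha, rfl⟩
    exact coroot_ne_zero (hΨ.ne_zero a ha)
  rootRefl_mem := by
    rintro _ ⟨a, ha, rfl⟩ _ ⟨b, hb, rfl⟩
    rw [rootRefl_coroot, ← coroot_map]
    exact ⟨_, hΨ.rootRefl_mem a ha b hb, rfl⟩
  reduced := by
    rintro _ ⟨a, ha, rfl⟩ c ⟨b, hb, hbc⟩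
    have hb' : c⁻¹ • a ∈ Ψ := by
      rwa [← coroot_involutive a, ← coroot_smul, ← hbc, coroot_involutive]
    simpa [inv_eq_iff_eq_inv, inv_neg] using hΨ.reduced a ha c⁻¹ hb'
  integral := by
    rintro _ ⟨a, ha, rfl⟩ _ ⟨b, hb, rfl⟩
    rw [coroot_involutive, real_inner_comm]
    exact hΨ.integral b hb a ha

protected theorem rootsIn (hΦ : IsRootSet Φ) (G : Subgroup (Equiv.Perm V)) :
    IsRootSet (rootsIn Φ G) where
  ne_zero a ha := hΦ.ne_zero a ha.1
  rootRefl_mem a ha b hb := by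
    refine ⟨hΦ.rootRefl_mem a ha.1 b hb.1, ?_⟩
    rw [sAff_rootRefl]
    exact G.mul_mem (G.mul_mem ha.2 hb.2) ha.2
  reduced a ha c hc := hΦ.reduced a ha.1 c hc.1
  integral a ha b hb := hΦ.integral a ha.1 b hb.1

theorem rootRefl_mem_longRoots (hΦ : IsRootSet Φ) (ha : a ∈ Φ) (hb : b ∈ longRoots Φ) :
    rootRefl a b ∈ longRoots Φ :=
  ⟨hΦ.rootRefl_mem a ha b hb.1, by simpa only [LinearIsometryEquiv.inner_map_map] using hb.2⟩

protected theorem neg_mem (hΨ : IsRootSet Ψ) (ha : a ∈ Ψ) : -a ∈ Ψ := by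
  simpa only [Submodule.reflection_orthogonalComplement_singleton_eq_neg]
    using hΨ.rootRefl_mem a ha a ha

theorem inner_sq_lt (hΨ : IsRootSet Ψ) (ha : a ∈ Ψ) (hb : b ∈ Ψ) (hne : a ≠ b) (hne' : a ≠ -b) :
    ⟪a, b⟫ ^ 2 < ⟪a, a⟫ * ⟪b, b⟫ := by
  refine lt_of_le_of_ne (by simpa only [sq] using real_inner_mul_inner_self_le a b) fun heq => ?_
  have hnorm : ‖⟪a, b⟫‖ = ‖a‖ * ‖b‖ := by
    rw [← sq_eq_sq₀ (norm_nonneg _) (by positivity), Real.norm_eq_abs, sq_abs, heq,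
      mul_pow, real_inner_self_eq_norm_sq, real_inner_self_eq_norm_sq]
  obtain ⟨r, -, rfl⟩ := (norm_inner_eq_norm_iff (hΨ.ne_zero a ha) (hΨ.ne_zero b hb)).mp hnorm
  rcases hΨ.reduced a ha r hb with rfl | rfl
  · exact hne (one_smul ℝ a).symm
  · exact hne' (by rw [neg_one_smul, neg_neg])

theorem exists_two_mul_inner_eq (hΨ : IsRootSet Ψ) (ha : a ∈ Ψ) (hb : b ∈ Ψ) :
    ∃ z : ℤ, 2 * ⟪a, b⟫ = z * ⟪b, b⟫ := by
  obtain ⟨z, hz⟩ := hΨ.integral b hb a ha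
  refine ⟨z, ?_⟩
  rwa [inner_coroot_right, div_eq_iff (real_inner_self_pos.mpr (hΨ.ne_zero b hb)).ne'] at hz

theorem exists_two_mul_inner_eq_of_le (hΨ : IsRootSet Ψ) (ha : a ∈ Ψ) (hb : b ∈ Ψ) (hne : a ≠ b)
    (hne' : a ≠ -b) (hle : ⟪a, a⟫ ≤ ⟪b, b⟫) : ∃ z : ℤ, |z| ≤ 1 ∧ 2 * ⟪a, b⟫ = z * ⟪b, b⟫ := by
  obtain ⟨z, hz⟩ := hΨ.exists_two_mul_inner_eq ha hb
  refine ⟨z, ?_, hz⟩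
  have hb_pos : 0 < ⟪b, b⟫ := real_inner_self_pos.mpr (hΨ.ne_zero b hb)
  have hlt : (z * ⟪b, b⟫) ^ 2 < (2 * ⟪b, b⟫) ^ 2 := by
    rw [← hz]
    nlinarith [hΨ.inner_sq_lt ha hb hne hne']
  rw [sq_lt_sq, abs_mul, abs_mul, mul_lt_mul_iff_left₀ (abs_pos.mpr hb_pos.ne'), abs_two] at hlt
  have : |z| < 2 := by exact_mod_cast hlt
  lia

theorem length_ratio (hΨ : IsRootSet Ψ) (ha : a ∈ Ψ) (hb : b ∈ Ψ) (hab : ⟪a, b⟫ ≠ 0)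
    (hlt : ⟪a, a⟫ < ⟪b, b⟫) :
    2 * ⟪a, a⟫ ≤ ⟪b, b⟫ ∧ ⟪b, b⟫ ≤ 3 * ⟪a, a⟫ ∧ |2 * ⟪a, b⟫| = ⟪b, b⟫ := by
  have ha_pos : 0 < ⟪a, a⟫ := real_inner_self_pos.mpr (hΨ.ne_zero a ha)
  have hb_pos : 0 < ⟪b, b⟫ := real_inner_self_pos.mpr (hΨ.ne_zero b hb)
  have hne : a ≠ b := by rintro rfl; exact hlt.false
  have hne' : a ≠ -b := by rintro rfl; simp at hlt
  obtain ⟨z, hz1, hz⟩ := hΨ.exists_two_mul_inner_eq_of_le ha hb hne hne' hlt.le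
  obtain ⟨y, hy⟩ := hΨ.exists_two_mul_inner_eq hb ha
  rw [real_inner_comm] at hy
  have habs : |2 * ⟪a, b⟫| = ⟪b, b⟫ := by
    have hz0 : z ≠ 0 := by rintro rfl; simp_all
    have hz1 : |(z : ℝ)| = 1 := by exact_mod_cast le_antisymm hz1 (Int.one_le_abs hz0)
    rw [hz, abs_mul, hz1, one_mul, abs_of_pos hb_pos]
  have hratio : ⟪b, b⟫ = |(y : ℝ)| * ⟪a, a⟫ := by
    rw [← habs, hy, abs_mul, abs_of_pos ha_pos]
  have hcs : ⟪b, b⟫ < 4 * ⟪a, a⟫ := by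
    have hsq : ⟪b, b⟫ ^ 2 = 4 * ⟪a, b⟫ ^ 2 := by rw [← habs, sq_abs]; ring
    nlinarith [hΨ.inner_sq_lt ha hb hne hne']
  rw [hratio] at hlt hcs
  have hy1 : 1 < |y| := by exact_mod_cast (lt_mul_iff_one_lt_left ha_pos).mp hlt
  have hy4 : |y| < 4 := by exact_mod_cast lt_of_mul_lt_mul_right hcs ha_pos.le
  have hy2 : (2 : ℝ) ≤ |(y : ℝ)| := by exact_mod_cast (show 2 ≤ |y| by lia)
  have hy3 : |(y : ℝ)| ≤ 3 := by exact_mod_cast (show |y| ≤ 3 by lia)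
  exact ⟨hratio ▸ mul_le_mul_of_nonneg_right hy2 ha_pos.le,
    hratio ▸ mul_le_mul_of_nonneg_right hy3 ha_pos.le, habs⟩

theorem add_mem_of_inner_neg (hΨ : IsRootSet Ψ) (ha : a ∈ Ψ) (hb : b ∈ Ψ) (hab : ⟪a, b⟫ < 0)
    (h0 : a + b ≠ 0) : a + b ∈ Ψ := by
  wlog hle : ⟪a, a⟫ ≤ ⟪b, b⟫ generalizing a b
  · rw [add_comm] at h0 ⊢
    exact this hb ha (by rwa [real_inner_comm]) h0 (le_of_not_ge hle)
  have hb_pos : 0 < ⟪b, b⟫ := real_inner_self_pos.mpr (hΨ.ne_zero b hb)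
  obtain ⟨z, hz1, hz⟩ := hΨ.exists_two_mul_inner_eq_of_le ha hb
    (by rintro rfl; exact (hab.trans hb_pos).false) (fun h => h0 (by rw [h, neg_add_cancel])) hle
  have hz0 : (z : ℝ) < 0 := by nlinarith
  obtain rfl : z = -1 := by
    have hz_neg : z < 0 := by exact_mod_cast hz0
    have hz_ge := (abs_le.mp hz1).1
    lia
  have hs := hΨ.rootRefl_mem b hb a ha
  rwa [rootRefl_apply', inner_coroot_right, hz, mul_div_cancel_right₀ _ hb_pos.ne', Int.cast_neg,
    Int.cast_one, neg_one_smul, sub_neg_eq_add] at hs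

theorem exists_multiset_of_mem_closure (hΨ : IsRootSet Ψ) {x : V}
    (hx : x ∈ AddSubgroup.closure Ψ) : ∃ s : Multiset V, (∀ b ∈ s, b ∈ Ψ) ∧ s.sum = x := by
  have hneg : Ψ ∪ -Ψ = Ψ := Set.union_eq_left.mpr fun b hb => by simpa using hΨ.neg_mem hb
  rw [← AddSubgroup.mem_toAddSubmonoid, AddSubgroup.closure_toAddSubmonoid, hneg] at hx
  exact AddSubmonoid.exists_multiset_of_mem_closure hx

-- Adding two roots at an obtuse angle gives a root or zero, so a shortest expression of `x` as a
-- sum of roots has no obtuse angles, and each of its terms is at most as long as `x`.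
theorem exists_root_eq_or_lt (hΨ : IsRootSet Ψ) {x v : V} (hx : x ∈ AddSubgroup.closure Ψ)
    (hxv : ⟪x, v⟫ ≠ 0) : ∃ b ∈ Ψ, ⟪b, v⟫ ≠ 0 ∧ (b = x ∨ ⟪b, b⟫ < ⟪x, x⟫) := by
  obtain ⟨s, hs, rfl⟩ := hΨ.exists_multiset_of_mem_closure hx
  clear hx
  induction hn : s.card using Nat.strong_induction_on generalizing s with
  | _ n ih =>
  subst hn
  obtain ⟨b, hbs, hbv⟩ := exists_mem_inner_ne_zero_of_multiset_sum hxv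
  obtain ⟨t, rfl⟩ := Multiset.exists_cons_of_mem hbs
  rw [Multiset.forall_mem_cons] at hs
  by_cases hacute : ∀ c ∈ t, 0 ≤ ⟪b, c⟫
  · have hbt : 0 ≤ ⟪b, t.sum⟫ := by
      rw [inner_multiset_sum]
      exact Multiset.sum_nonneg (Multiset.forall_mem_map_iff.mpr hacute)
    refine ⟨b, hs.1, hbv, ?_⟩
    rw [Multiset.sum_cons]
    rcases eq_or_ne t.sum 0 with h0 | h0
    · exact .inl (by rw [h0, add_zero])
    · right
      rw [real_inner_add_add_self]
      linarith [real_inner_self_pos.mpr h0]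
  · push Not at hacute
    obtain ⟨c, hct, hbc⟩ := hacute
    obtain ⟨r, rfl⟩ := Multiset.exists_cons_of_mem hct
    rw [Multiset.forall_mem_cons] at hs
    have hsum : (b ::ₘ c ::ₘ r).sum = ((b + c) ::ₘ r).sum := by
      simp only [Multiset.sum_cons, add_assoc]
    rw [hsum] at hxv ⊢
    by_cases h0 : b + c = 0
    · rw [Multiset.sum_cons, h0, zero_add] at hxv ⊢
      exact ih _ (by simp) r hs.2.2 hxv rfl
    · exact ih _ (by simp) _
        (Multiset.forall_mem_cons.mpr ⟨hΨ.add_mem_of_inner_neg hs.1 hs.2.1 hbc h0, hs.2.2⟩) hxv rfl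

theorem exists_int_of_smul_mem_closure (hΨ : IsRootSet Ψ) (hg : g ∈ Ψ) {c : ℝ}
    (hc : c • g ∈ AddSubgroup.closure Ψ) : ∃ z : ℤ, c = z := by
  refine ⟨round c, sub_eq_zero.mp ?_⟩
  by_contra hd0
  set d : ℝ := c - round c with hd
  have hdg : d • g ∈ AddSubgroup.closure Ψ := by
    rw [hd, sub_smul, Int.cast_smul_eq_zsmul]
    exact sub_mem hc (zsmul_mem (AddSubgroup.subset_closure hg) _)
  have hg_pos : 0 < ⟪g, g⟫ := real_inner_self_pos.mpr (hΨ.ne_zero g hg)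
  obtain ⟨b, hb, hbg, hle⟩ := hΨ.exists_root_eq_or_lt hdg
    (by rw [real_inner_smul_left]; exact mul_ne_zero hd0 hg_pos.ne' : ⟪d • g, g⟫ ≠ 0)
  have hb_pos : 0 < ⟪b, b⟫ := real_inner_self_pos.mpr (hΨ.ne_zero b hb)
  have hb_le : ⟪b, b⟫ ≤ d ^ 2 * ⟪g, g⟫ := by
    have hdg_sq : ⟪d • g, d • g⟫ = d ^ 2 * ⟪g, g⟫ := by
      rw [real_inner_smul_left, real_inner_smul_right]; ring
    rw [← hdg_sq]
    rcases hle with rfl | hlt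
    · exact le_rfl
    · exact hlt.le
  have hd_sq : d ^ 2 ≤ 1 / 4 := by
    rw [← sq_abs]
    nlinarith [abs_sub_round c, abs_nonneg d]
  have h4 : 4 * ⟪b, b⟫ ≤ ⟪g, g⟫ := by nlinarith
  have h3 : ⟪g, g⟫ ≤ 3 * ⟪b, b⟫ := (hΨ.length_ratio hb hg hbg (by linarith)).2.1
  linarith

theorem exists_inner_ne_zero (hΦ : IsRootSet Φ) (hirr : IsIrreducibleRS Φ) (ha : a ∈ Φ)
    (hb : b ∈ Φ) : ∃ a' ∈ Φ, ⟪a', a'⟫ = ⟪a, a⟫ ∧ ⟪a', b⟫ ≠ 0 := by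
  let Φ₁ : Set V := {g ∈ Φ | ∃ a' ∈ Φ, ⟪a', a'⟫ = ⟪a, a⟫ ∧ ⟪a', g⟫ ≠ 0}
  have ha₁ : a ∈ Φ₁ := ⟨ha, a, ha, rfl, inner_self_ne_zero.mpr (hΦ.ne_zero a ha)⟩
  have horth : ∀ g ∈ Φ₁, ∀ d ∈ Φ \ Φ₁, ⟪g, d⟫ = 0 := by
    rintro g ⟨hg, a', ha', hlen, hag⟩ d ⟨hd, hd₁⟩
    by_contra hgd
    have had : ⟪a', d⟫ = 0 := by
      by_contra had
      exact hd₁ ⟨hd, a', ha', hlen, had⟩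
    refine hd₁ ⟨hd, rootRefl g a', hΦ.rootRefl_mem g hg a' ha', ?_, ?_⟩
    · rw [LinearIsometryEquiv.inner_map_map, hlen]
    · rw [rootRefl_apply', inner_sub_left, had, real_inner_smul_left, zero_sub, neg_ne_zero,
        inner_coroot_right]
      exact mul_ne_zero (div_ne_zero (mul_ne_zero two_ne_zero hag)
        (inner_self_ne_zero.mpr (hΦ.ne_zero g hg))) hgd
  have hunion : Φ₁ ∪ Φ \ Φ₁ = Φ := Set.union_sdiff_cancel (Set.sep_subset _ _)
  rcases hirr Φ₁ (Φ \ Φ₁) hunion horth with h | h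
  · exact absurd ha₁ (h ▸ Set.notMem_empty a)
  · exact (Set.sdiff_eq_empty.mp h hb).2

theorem exists_longRoot_inner_ne_zero (hΦ : IsRootSet Φ) (hirr : IsIrreducibleRS Φ) (ha : a ∈ Φ)
    (hb : b ∈ longRoots Φ) : ∃ b' ∈ longRoots Φ, ⟪b', b'⟫ = ⟪b, b⟫ ∧ ⟪b', a⟫ ≠ 0 := by
  obtain ⟨b', hb', hlen, hinner⟩ := hΦ.exists_inner_ne_zero hirr hb.1 ha
  exact ⟨b', ⟨hb', hlen ▸ hb.2⟩, hlen, hinner⟩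

theorem not_three_lengths (hΦ : IsRootSet Φ) (hirr : IsIrreducibleRS Φ) {c : V} (ha : a ∈ Φ)
    (hb : b ∈ Φ) (hc : c ∈ Φ) (hab : ⟪a, a⟫ < ⟪b, b⟫) : ¬⟪b, b⟫ < ⟪c, c⟫ := by
  intro hbc
  obtain ⟨a', ha', hlen_a, hab'⟩ := hΦ.exists_inner_ne_zero hirr ha hb
  obtain ⟨b', hb', hlen_b, hbc'⟩ := hΦ.exists_inner_ne_zero hirr hb hc
  obtain ⟨a'', ha'', hlen_a', hac'⟩ := hΦ.exists_inner_ne_zero hirr ha hc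
  have hab_ratio := (hΦ.length_ratio ha' hb hab' (by rwa [hlen_a])).1
  have hbc_ratio := (hΦ.length_ratio hb' hc hbc' (by rwa [hlen_b])).1
  have hac_ratio := (hΦ.length_ratio ha'' hc hac' (by rw [hlen_a']; exact hab.trans hbc)).2.1
  rw [hlen_a] at hab_ratio
  rw [hlen_b] at hbc_ratio
  rw [hlen_a'] at hac_ratio
  linarith [real_inner_self_pos.mpr (hΦ.ne_zero a ha)]

-- The coroot of a long root is short, and a short element of a lattice of roots is a root.
theorem mem_of_coroot_mem_closure (hΨ : IsRootSet Ψ) (hsub : Ψ ⊆ Φ) (hg : g ∈ longRoots Φ)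
    (hg0 : g ≠ 0) (hmem : coroot g ∈ AddSubgroup.closure (coroot '' Ψ)) : g ∈ Ψ := by
  obtain ⟨_, ⟨b, hb, rfl⟩, -, heq | hlt⟩ := hΨ.coroots.exists_root_eq_or_lt hmem
    (inner_self_ne_zero.mpr (coroot_ne_zero hg0))
  · rwa [← coroot_involutive.injective heq]
  · rw [inner_self_coroot, inner_self_coroot,
      div_lt_div_iff_of_pos_left four_pos (real_inner_self_pos.mpr (hΨ.ne_zero b hb))
        (real_inner_self_pos.mpr hg0)] at hlt
    exact absurd (hg.2 b (hsub hb)) hlt.not_ge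

theorem subset_of_subset_closure (hΦ : IsRootSet Φ) (hirr : IsIrreducibleRS Φ)
    (hΨ : IsRootSet Ψ) (hsub : Ψ ⊆ Φ) (hlong : longRoots Φ ⊆ Ψ)
    (hspan : Φ ⊆ AddSubgroup.closure Ψ) : Φ ⊆ Ψ := by
  intro g hg
  by_cases hg_long : g ∈ longRoots Φ
  · exact hlong hg_long
  obtain ⟨c, hc, hgc⟩ : ∃ c ∈ Φ, ⟪g, g⟫ < ⟪c, c⟫ := by
    contrapose! hg_long
    exact ⟨hg, hg_long⟩
  obtain ⟨b, hb, -, rfl | hbg⟩ := hΨ.exists_root_eq_or_lt (hspan hg)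
    (inner_self_ne_zero.mpr (hΦ.ne_zero g hg))
  · exact hb
  · exact absurd hgc (hΦ.not_three_lengths hirr (hsub hb) hg hc hbg)

-- If `a` is short and `b'` is long with `⟪b', a⟫ ≠ 0`, then `b' - s_a b'` is `± (⟪b, b⟫ / 2)`
-- times the coroot of `a`.
theorem half_smul_coroot_mem_closure_longRoots (hΦ : IsRootSet Φ) (hirr : IsIrreducibleRS Φ)
    (ha : a ∈ Φ) (hb : b ∈ longRoots Φ) :
    (⟪b, b⟫ / 2) • coroot a ∈ AddSubgroup.closure (longRoots Φ) := by
  rcases (hb.2 a ha).eq_or_lt with hlen | hlt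
  · rw [← hlen, half_inner_self_smul_coroot (hΦ.ne_zero a ha)]
    exact AddSubgroup.subset_closure ⟨ha, hlen ▸ hb.2⟩
  · obtain ⟨b', hb', hlen, hinner⟩ := hΦ.exists_longRoot_inner_ne_zero hirr ha hb
    have hdiff : ⟪b', a⟫ • coroot a ∈ AddSubgroup.closure (longRoots Φ) := by
      rw [← sub_sub_self b' (inner ℝ b' a • coroot a), ← rootRefl_apply]
      exact sub_mem (AddSubgroup.subset_closure hb')
        (AddSubgroup.subset_closure (hΦ.rootRefl_mem_longRoots ha hb'))
    have habs := (hΦ.length_ratio ha hb'.1 (real_inner_comm a b' ▸ hinner) (hlen ▸ hlt)).2.2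
    rw [hlen, real_inner_comm] at habs
    rcases eq_or_eq_neg_of_abs_eq habs with h | h
    · rwa [show ⟪b, b⟫ / 2 = ⟪b', a⟫ by linarith]
    · rw [show ⟪b, b⟫ / 2 = -⟪b', a⟫ by linarith, neg_smul]
      exact neg_mem hdiff

theorem sub_zsmul_coroot_mem_coweightLattice (hΨ : IsRootSet Ψ) (ha : a ∈ Ψ) {v : V}
    (hv : v ∈ coweightLattice Ψ) (z : ℤ) : v - (z : ℝ) • coroot a ∈ coweightLattice Ψ := by
  intro b hb
  obtain ⟨n, hn⟩ := hv b hb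
  obtain ⟨m, hm⟩ := hΨ.integral a ha b hb
  refine ⟨n - z * m, ?_⟩
  rw [inner_sub_left, real_inner_smul_left, real_inner_comm b (coroot a), hm, hn]
  push_cast
  rfl

end IsRootSet

/-! ### Displacements under products of reflections -/

section Displacement

variable {R E ι : Type*} [CommRing R] [AddCommGroup E] [Module R E]

/-- The endomorphisms that preserve `Y` and fix `x` modulo `Y`. -/
def fixingMod (Y : AddSubgroup E) (x : E) : Submonoid (Module.End R E) where
  carrier := {A | (∀ y ∈ Y, A y ∈ Y) ∧ A x - x ∈ Y}
  one_mem' := ⟨fun _ hy => hy, by simp⟩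
  mul_mem' {A B} hA hB := by
    refine ⟨fun y hy => hA.1 _ (hB.1 y hy), ?_⟩
    rw [Module.End.mul_apply, ← sub_add_sub_cancel, ← map_sub]
    exact add_mem (hA.1 _ hB.2) hA.2

/-- The endomorphisms that preserve `X` and move each of its points by an element of `H`. -/
def displacing (X : Set E) (H : AddSubgroup E) : Submonoid (Module.End R E) where
  carrier := {A | ∀ x ∈ X, A x ∈ X ∧ A x - x ∈ H}
  one_mem' x hx := ⟨hx, by simp⟩
  mul_mem' {A B} hA hB x hx := by
    obtain ⟨hBx, hBH⟩ := hB x hx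
    refine ⟨(hA _ hBx).1, ?_⟩
    rw [Module.End.mul_apply, ← sub_add_sub_cancel]
    exact add_mem (hA _ hBx).2 hBH

theorem preReflection_mem_displacing {a : E} {f : Module.Dual R E} {X : Set E} {H : AddSubgroup E}
    (hX : ∀ x ∈ X, Module.preReflection a f x ∈ X) (hf : ∀ x ∈ X, ∃ z : ℤ, f x = z) (ha : a ∈ H) :
    Module.preReflection a f ∈ displacing X H := by
  intro x hx
  obtain ⟨z, hz⟩ := hf x hx
  refine ⟨hX x hx, ?_⟩
  rw [Module.preReflection_apply, sub_sub_cancel_left, hz, Int.cast_smul_eq_zsmul]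
  exact neg_mem (zsmul_mem ha z)

-- A point dual to the leftmost factor is fixed modulo `Q` by all the other factors, so the product
-- moves it by the vector of the leftmost factor, modulo `Q`. Cancel that factor and repeat.
theorem mem_of_prod_preReflection_mem_displacing {a : ι → E} {f : ι → Module.Dual R E} {X : Set E}
    {Q H : AddSubgroup E} (hQH : Q ≤ H) (hfa : ∀ i, f i (a i) = 2)
    (hX : ∀ i, ∀ x ∈ X, Module.preReflection (a i) (f i) x ∈ X)
    (hf : ∀ i, ∀ x ∈ X, ∃ z : ℤ, f i x = z)
    (hQ : ∀ i, ∀ q ∈ Q, Module.preReflection (a i) (f i) q ∈ Q) {l : List ι} (hl : l.Nodup)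
    (hprod : (l.map fun i => Module.preReflection (a i) (f i)).prod ∈ displacing X H)
    (hdual : ∀ j ∈ l, ∃ x ∈ X, f j x • a j - a j ∈ Q ∧ ∀ i ∈ l, i ≠ j → f i x • a i ∈ Q) :
    ∀ j ∈ l, a j ∈ H := by
  induction l with
  | nil => simp
  | cons i l ih =>
    rw [List.nodup_cons] at hl
    rw [List.map_cons, List.prod_cons] at hprod
    set T := (l.map fun i => Module.preReflection (a i) (f i)).prod
    have hi : a i ∈ H := by
      obtain ⟨x, hx, hself, hother⟩ := hdual i List.mem_cons_self
      have hT : T ∈ fixingMod Q x := by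
        refine Submonoid.list_prod_mem _ fun A hA => ?_
        obtain ⟨j, hj, rfl⟩ := List.mem_map.mp hA
        refine ⟨hQ j, ?_⟩
        rw [Module.preReflection_apply, sub_sub_cancel_left]
        exact neg_mem (hother j (List.mem_cons_of_mem i hj) (by rintro rfl; exact hl.1 hj))
      have hmove := sub_mem (hQH (sub_mem (hQ i _ hT.2) hself)) (hprod x hx).2
      convert hmove using 1
      rw [Module.End.mul_apply, map_sub, Module.preReflection_apply _ _ x]
      abel
    have hT : T ∈ displacing X H := by
      have hcancel :
          T = Module.preReflection (a i) (f i) * (Module.preReflection (a i) (f i) * T) := by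
        ext x
        exact (Module.involutive_preReflection (hfa i) (T x)).symm
      rw [hcancel]
      exact mul_mem (preReflection_mem_displacing (hX i) (hf i) hi) hprod
    rw [List.forall_mem_cons] at hdual ⊢
    refine ⟨hi, ih hl.2 hT fun j hj => ?_⟩
    obtain ⟨x, hx, hself, hother⟩ := hdual.2 j hj
    exact ⟨x, hx, hself, fun i hi => hother i (List.mem_cons_of_mem _ hi)⟩

end Displacement

/-! ### Homogenization of affine reflections -/

/-- The affine function `v ↦ ⟪v, a⟫ - k` vanishing on the mirror of `sAff a k`, homogenized to a
linear form on `V × ℝ`. -/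
def affForm (a : V) (k : ℝ) : V × ℝ →ₗ[ℝ] ℝ :=
  (innerₗ V a).coprod (-k • LinearMap.id)

theorem affForm_apply (a : V) (k : ℝ) (x : V × ℝ) : affForm a k x = ⟪x.1, a⟫ - k * x.2 := by
  simp only [affForm, LinearMap.coprod_apply, innerₗ_apply_apply, LinearMap.smul_apply,
    LinearMap.id_apply, smul_eq_mul, real_inner_comm a]
  ring

/-- The linear reflection of `V × ℝ` that induces `sAff a k` on the hyperplane `V × {1}`. -/
def homRefl (a : V) (k : ℝ) : Module.End ℝ (V × ℝ) :=
  Module.preReflection (coroot a, 0) (affForm a k)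

theorem homRefl_apply (a : V) (k : ℝ) (x : V × ℝ) :
    homRefl a k x = (x.1 - affForm a k x • coroot a, x.2) := by
  ext <;> simp [homRefl, Module.preReflection_apply]

/-- The linear reflection `rootRefl a` as an endomorphism of `V`, so that products of such
reflections can be compared with those of `homRefl`. -/
def linRefl (a : V) : Module.End ℝ V := Module.preReflection a (innerₗ V (coroot a))

theorem linRefl_apply (a v : V) : linRefl a v = rootRefl a v := by
  rw [linRefl, Module.preReflection_apply, innerₗ_apply_apply, rootRefl_apply', real_inner_comm]

theorem homRefl_apply_zero (a : V) (k : ℝ) (v : V) : homRefl a k (v, 0) = (rootRefl a v, 0) := by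
  rw [homRefl_apply, affForm_apply, mul_zero, sub_zero, rootRefl_apply]

theorem prod_homRefl_apply_zero {ι : Type*} (a : ι → V) (k : ι → ℝ) (l : List ι) (v : V) :
    (l.map fun i => homRefl (a i) (k i)).prod (v, 0) =
      ((l.map fun i => linRefl (a i)).prod v, 0) := by
  induction l with
  | nil => rfl
  | cons i l ih =>
    simp only [List.map_cons, List.prod_cons, Module.End.mul_apply, ih, homRefl_apply_zero,
      linRefl_apply]

/-- `A` induces `w` on the hyperplane `V × {1}`, identified with `V`. -/
def IsHomogenization (A : Module.End ℝ (V × ℝ)) (w : Equiv.Perm V) : Prop :=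
  ∀ v, A (v, 1) = (w v, 1)

namespace IsHomogenization

variable {A B : Module.End ℝ (V × ℝ)} {w w' : Equiv.Perm V}

theorem unique (hA : IsHomogenization A w) (hB : IsHomogenization B w) : A = B := by
  refine LinearMap.ext fun x => ?_
  have hx : x = (x.1, 1) + (x.2 - 1) • ((0, 1) : V × ℝ) := by ext <;> simp
  rw [hx, map_add, map_add, map_smul, map_smul, hA, hB, hA, hB]

theorem one : IsHomogenization (1 : Module.End ℝ (V × ℝ)) 1 := fun _ => rfl

theorem mul (hA : IsHomogenization A w) (hB : IsHomogenization B w') :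
    IsHomogenization (A * B) (w * w') := fun v => by
  rw [Module.End.mul_apply, hB, hA, Equiv.Perm.mul_apply]

theorem homRefl (a : V) (k : ℝ) : IsHomogenization (homRefl a k) (sAff a k) := fun v => by
  rw [homRefl_apply, affForm_apply, mul_one]
  rfl

theorem list_prod {ι : Type*} (a : ι → V) (k : ι → ℝ) (l : List ι) :
    IsHomogenization (l.map fun i => _root_.homRefl (a i) (k i)).prod
      (l.map fun i => sAff (a i) (k i)).prod := by
  induction l with
  | nil => exact one
  | cons i l ih => exact (homRefl (a i) (k i)).mul ih

theorem exists_mem_of_mem_closure {ι : Type*} {a : ι → V} {k : ι → ℝ}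
    {M : Submonoid (Module.End ℝ (V × ℝ))} (hM : ∀ i, _root_.homRefl (a i) (k i) ∈ M)
    (hw : w ∈ Subgroup.closure (Set.range fun i => sAff (a i) (k i))) :
    ∃ A ∈ M, IsHomogenization A w := by
  induction hw using Subgroup.closure_induction'' with
  | one => exact ⟨1, one_mem M, one⟩
  | mem _ h =>
    obtain ⟨i, rfl⟩ := h
    exact ⟨_, hM i, homRefl (a i) (k i)⟩
  | inv_mem _ h =>
    obtain ⟨i, rfl⟩ := h
    exact ⟨_, hM i, homRefl (a i) (k i)⟩
  | mul _ _ _ _ hu hv =>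
    obtain ⟨A, hAM, hA⟩ := hu
    obtain ⟨B, hBM, hB⟩ := hv
    exact ⟨A * B, mul_mem hAM hBM, hA.mul hB⟩

end IsHomogenization

theorem rootRefl_mem_closure {S : Set V} {a : V}
    (hS : ∀ b ∈ S, rootRefl a b ∈ AddSubgroup.closure S) {x : V}
    (hx : x ∈ AddSubgroup.closure S) : rootRefl a x ∈ AddSubgroup.closure S := by
  have hle : AddSubgroup.closure S ≤
      (AddSubgroup.closure S).comap (rootRefl a).toLinearEquiv.toAddEquiv.toAddMonoidHom :=
    (AddSubgroup.closure_le _).mpr hS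
  exact hle hx

theorem affForm_smul_coroot_mem_of_mem_closure {ι : Type*} {a : ι → V} {k : ι → ℝ}
    {Y : AddSubgroup V} (hY : ∀ i, ∀ y ∈ Y, rootRefl (a i) y ∈ Y) {x : V × ℝ}
    (hx : ∀ i, affForm (a i) (k i) x • coroot (a i) ∈ Y) {g : V} {r : ℝ}
    (hg : sAff g r ∈ Subgroup.closure (Set.range fun i => sAff (a i) (k i))) :
    affForm g r x • coroot g ∈ Y := by
  have hM (i : ι) : homRefl (a i) (k i) ∈ fixingMod (R := ℝ) (Y.prod ⊥) x := by
    refine ⟨fun y hy => ?_, ?_⟩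
    · obtain ⟨y, c⟩ := y
      obtain ⟨hyY, rfl : c = 0⟩ := hy
      rw [homRefl_apply_zero]
      exact ⟨hY i y hyY, rfl⟩
    · refine ⟨?_, by simp [homRefl_apply]⟩
      simpa [homRefl_apply] using hx i
  obtain ⟨A, hAM, hA⟩ := IsHomogenization.exists_mem_of_mem_closure hM hg
  rw [hA.unique (.homRefl g r)] at hAM
  simpa [homRefl_apply] using hAM.2.1

/-- The coweight lattice together with integral heights: the points of `V × ℝ` at which all forms
`affForm g r` with `g ∈ Φ` and `r ∈ ℤ` take integral values. -/
def homCoweightLattice (Φ : Set V) : Set (V × ℝ) :=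
  coweightLattice Φ ×ˢ Set.range ((↑) : ℤ → ℝ)

theorem exists_affForm_eq_int {Φ : Set V} {g : V} (hg : g ∈ Φ) (r : ℤ) {x : V × ℝ}
    (hx : x ∈ homCoweightLattice Φ) : ∃ z : ℤ, affForm g r x = z := by
  obtain ⟨hx₁, c, hc⟩ := hx
  obtain ⟨y, hy⟩ := hx₁ g hg
  exact ⟨y - r * c, by rw [affForm_apply, hy, ← hc]; push_cast; rfl⟩

theorem mem_homCoweightLattice {Φ : Set V} {x : V × ℝ} (hne : Φ.Nonempty)
    (h : ∀ g ∈ Φ, ∀ r : ℤ, ∃ z : ℤ, affForm g r x = z) : x ∈ homCoweightLattice Φ := by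
  refine ⟨fun g hg => by simpa [affForm_apply] using h g hg 0, ?_⟩
  obtain ⟨g, hg⟩ := hne
  obtain ⟨y, hy⟩ := h g hg 0
  obtain ⟨z, hz⟩ := h g hg 1
  refine ⟨y - z, ?_⟩
  rw [affForm_apply] at hy hz
  push_cast at hy hz ⊢
  linarith

theorem mem_coweightLattice_coroots {Φ : Set V} {x : V × ℝ}
    (h : ∀ g ∈ Φ, ∀ r : ℤ, ∃ z : ℤ, affForm g r x * (2 / ⟪g, g⟫) = z) :
    x.1 ∈ coweightLattice (coroot '' Φ) := by
  rintro _ ⟨g, hg, rfl⟩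
  obtain ⟨z, hz⟩ := h g hg 0
  refine ⟨z, ?_⟩
  rw [← hz, affForm_apply, Int.cast_zero, zero_mul, sub_zero, coroot, real_inner_smul_right,
    mul_comm]

theorem exists_height_eq_int_mul {g : V} (hg : g ≠ 0) {x : V × ℝ}
    (h : ∀ r : ℤ, ∃ z : ℤ, affForm g r x * (2 / ⟪g, g⟫) = z) :
    ∃ z : ℤ, x.2 = z * (⟪g, g⟫ / 2) := by
  obtain ⟨y, hy⟩ := h 0
  obtain ⟨z, hz⟩ := h 1
  have := (real_inner_self_pos.mpr hg).ne'
  refine ⟨y - z, ?_⟩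
  rw [Int.cast_sub, ← hy, ← hz, affForm_apply, affForm_apply, Int.cast_zero, Int.cast_one]
  field_simp
  ring

namespace IsRootSet

variable {Φ : Set V} {a : V}

theorem homRefl_mem_homCoweightLattice (hΦ : IsRootSet Φ) (ha : a ∈ Φ) (k : ℤ) {x : V × ℝ}
    (hx : x ∈ homCoweightLattice Φ) : homRefl a k x ∈ homCoweightLattice Φ := by
  obtain ⟨z, hz⟩ := exists_affForm_eq_int ha k hx
  rw [homRefl_apply, hz]
  exact ⟨hΦ.sub_zsmul_coroot_mem_coweightLattice ha hx.1 z, hx.2⟩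

theorem linRefl_mem_coweightLattice (hΦ : IsRootSet Φ) (ha : a ∈ Φ) {x : V}
    (hx : x ∈ coweightLattice (coroot '' Φ)) : linRefl a x ∈ coweightLattice (coroot '' Φ) := by
  obtain ⟨z, hz⟩ := hx _ ⟨a, ha, rfl⟩
  rw [linRefl_apply, rootRefl_apply', hz]
  simpa only [coroot_involutive a] using
    hΦ.coroots.sub_zsmul_coroot_mem_coweightLattice ⟨a, ha, rfl⟩ hx z

theorem homRefl_mem_displacing (hΦ : IsRootSet Φ) (ha : a ∈ Φ) (k : ℤ) {H : AddSubgroup V}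
    (haH : coroot a ∈ H) : homRefl a k ∈ displacing (homCoweightLattice Φ) (H.prod ⊥) :=
  preReflection_mem_displacing (fun _ => hΦ.homRefl_mem_homCoweightLattice ha k)
    (fun _ => exists_affForm_eq_int ha k) ⟨haH, rfl⟩

theorem linRefl_mem_displacing (hΦ : IsRootSet Φ) (ha : a ∈ Φ) {H : AddSubgroup V}
    (haH : a ∈ H) : linRefl a ∈ displacing (coweightLattice (coroot '' Φ)) H :=
  preReflection_mem_displacing (fun _ => hΦ.linRefl_mem_coweightLattice ha)
    (fun x hx => by simpa [real_inner_comm] using hx _ ⟨a, ha, rfl⟩) haH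

end IsRootSet

/-! ### Generating sets of the affine Weyl group -/

/-- The reflections in the affine roots `(α i, m i)` of `Φ` generate the affine Weyl group. -/
structure GeneratesAffWeylGroup {ι : Type*} (Φ : Set V) (α : ι → V) (m : ι → ℤ) : Prop where
  mem : ∀ i, α i ∈ Φ
  closure_eq : Subgroup.closure (Set.range fun i => sAff (α i) (m i)) = AffWeylGroup Φ

namespace GeneratesAffWeylGroup

variable {ι : Type*} {Φ : Set V} {α : ι → V} {m : ι → ℤ} {g : V}

theorem affForm_smul_coroot_mem (hα : GeneratesAffWeylGroup Φ α m) {Y : AddSubgroup V}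
    (hY : ∀ i, ∀ y ∈ Y, rootRefl (α i) y ∈ Y) {x : V × ℝ}
    (hx : ∀ i, affForm (α i) (m i) x • coroot (α i) ∈ Y) (hg : g ∈ Φ) (r : ℤ) :
    affForm g r x • coroot g ∈ Y := by
  refine affForm_smul_coroot_mem_of_mem_closure hY hx ?_
  rw [hα.closure_eq]
  exact Subgroup.subset_closure ⟨g, hg, r, rfl⟩

theorem eq_zero_of_affForm_eq_zero (hα : GeneratesAffWeylGroup Φ α m) (hΦ : IsCrystRootSystem Φ)
    {x : V × ℝ} (hx : ∀ i, affForm (α i) (m i) x = 0) : x = 0 := by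
  have haff (g : V) (hg : g ∈ Φ) (r : ℤ) : affForm g r x = 0 := by
    have hzero := hα.affForm_smul_coroot_mem (Y := ⊥) (x := x) (g := g)
      (by rintro i y rfl; exact map_zero _) (by simp [hx]) hg r
    exact (smul_eq_zero.mp hzero).resolve_right (coroot_ne_zero (hΦ.ne_zero g hg))
  simp only [affForm_apply] at haff
  have hfst : x.1 = 0 := by
    have hinner : innerₗ V x.1 = 0 :=
      LinearMap.ext_on hΦ.spanning fun g hg => by simpa using haff g hg 0
    exact inner_self_eq_zero.mp (LinearMap.congr_fun hinner x.1)
  obtain ⟨g, hg⟩ := hΦ.nonempty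
  have hsnd : x.2 = 0 := by simpa [hfst] using haff g hg 1
  exact Prod.ext hfst hsnd

theorem exists_dual_basis [Fintype ι] (hα : GeneratesAffWeylGroup Φ α m)
    (hΦ : IsCrystRootSystem Φ) (hcard : Fintype.card ι = Module.finrank ℝ V + 1) :
    ∃ b : Module.Basis ι ℝ (V × ℝ), ∀ x i, b.repr x i = affForm (α i) (m i) x := by
  have : FiniteDimensional ℝ V := ⟨⟨hΦ.finite.toFinset, by simpa using hΦ.spanning⟩⟩
  let L : V × ℝ →ₗ[ℝ] ι → ℝ := LinearMap.pi fun i => affForm (α i) (m i)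
  have hL : Function.Injective L := by
    rw [← LinearMap.ker_eq_bot, LinearMap.ker_eq_bot']
    exact fun x hx => hα.eq_zero_of_affForm_eq_zero hΦ (congrFun hx)
  have hdim : Module.finrank ℝ (V × ℝ) = Module.finrank ℝ (ι → ℝ) := by
    rw [Module.finrank_prod, Module.finrank_self, Module.finrank_fintype_fun_eq_card, hcard]
  exact ⟨.ofEquivFun (L.linearEquivOfInjective hL hdim), fun x i => rfl⟩

theorem coroot_mem_closure_range (hα : GeneratesAffWeylGroup Φ α m) (hΦ : IsRootSet Φ)
    (hg : g ∈ Φ) : coroot g ∈ AddSubgroup.closure (Set.range fun i => coroot (α i)) := by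
  set Y := AddSubgroup.closure (Set.range fun i => coroot (α i))
  have hmem (i : ι) : coroot (α i) ∈ Y := AddSubgroup.subset_closure ⟨i, rfl⟩
  have hY (i : ι) (y : V) (hy : y ∈ Y) : rootRefl (α i) y ∈ Y := by
    refine rootRefl_mem_closure ?_ hy
    rintro _ ⟨j, rfl⟩
    obtain ⟨c, hc⟩ := hΦ.integral _ (hα.mem j) _ (hα.mem i)
    rw [rootRefl_apply, real_inner_comm, hc, Int.cast_smul_eq_zsmul]
    exact sub_mem (hmem j) (zsmul_mem (hmem i) c)
  have hx (i : ι) : affForm (α i) (m i) (0, 1) • coroot (α i) ∈ Y := by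
    rw [affForm_apply, inner_zero_left, zero_sub, mul_one, neg_smul, Int.cast_smul_eq_zsmul]
    exact neg_mem (zsmul_mem (hmem i) (m i))
  simpa [affForm_apply] using hα.affForm_smul_coroot_mem hY hx hg (-1)

theorem dual_basis_mem_homCoweightLattice (hα : GeneratesAffWeylGroup Φ α m)
    (hΦ : IsCrystRootSystem Φ) {b : Module.Basis ι ℝ (V × ℝ)}
    (hb : ∀ x i, b.repr x i = affForm (α i) (m i) x) (j : ι) : b j ∈ homCoweightLattice Φ := by
  classical
  refine mem_homCoweightLattice hΦ.nonempty fun g hg r => ?_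
  set Y := AddSubgroup.closure (coroot '' Φ)
  have hmem (g : V) (hg : g ∈ Φ) : coroot g ∈ Y := AddSubgroup.subset_closure ⟨g, hg, rfl⟩
  have hY (i : ι) (y : V) (hy : y ∈ Y) : rootRefl (α i) y ∈ Y := by
    refine rootRefl_mem_closure (fun c hc => ?_) hy
    rw [← rootRefl_coroot]
    exact AddSubgroup.subset_closure (hΦ.isRootSet.coroots.rootRefl_mem _ ⟨_, hα.mem i, rfl⟩ c hc)
  have hx (i : ι) : affForm (α i) (m i) (b j) • coroot (α i) ∈ Y := by
    rw [← hb, b.repr_self_apply]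
    split_ifs
    · rw [one_smul]
      exact hmem _ (hα.mem i)
    · rw [zero_smul]
      exact zero_mem Y
  exact hΦ.isRootSet.coroots.exists_int_of_smul_mem_closure (Set.mem_image_of_mem _ hg)
    (hα.affForm_smul_coroot_mem hY hx hg r)

theorem mem_closure_range [Fintype ι] (hα : GeneratesAffWeylGroup Φ α m)
    (hΦ : IsCrystRootSystem Φ) (hcard : Fintype.card ι = Module.finrank ℝ V + 1) (hg : g ∈ Φ) :
    g ∈ AddSubgroup.closure (Set.range α) := by
  obtain ⟨b, hb⟩ := hα.exists_dual_basis hΦ hcard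
  choose c hc using fun j => (hα.dual_basis_mem_homCoweightLattice hΦ hb j).1 g hg
  have hexpand : g = ∑ j, c j • α j := by
    refine ext_inner_left ℝ fun v => ?_
    have hv := congrArg (affForm g 0) (b.sum_repr (v, 0))
    simp only [map_sum, map_smul, hb, affForm_apply, zero_mul, mul_zero, sub_zero, hc] at hv
    rw [← hv, inner_sum]
    refine Finset.sum_congr rfl fun j _ => ?_
    rw [← Int.cast_smul_eq_zsmul ℝ, real_inner_smul_right, smul_eq_mul, mul_comm]
  rw [hexpand]
  exact sum_mem fun j _ => zsmul_mem (AddSubgroup.subset_closure (Set.mem_range_self j)) (c j)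

theorem coroot_mem_of_prod_mem_displacing [Fintype ι] (hα : GeneratesAffWeylGroup Φ α m)
    (hΦ : IsCrystRootSystem Φ) (hcard : Fintype.card ι = Module.finrank ℝ V + 1) {l : List ι}
    (hnodup : l.Nodup) (hl : ∀ i, i ∈ l) {H : AddSubgroup V}
    (hprod : (l.map fun i => homRefl (α i) (m i)).prod ∈
      displacing (homCoweightLattice Φ) (H.prod ⊥)) (hg : g ∈ Φ) : coroot g ∈ H := by
  classical
  obtain ⟨b, hb⟩ := hα.exists_dual_basis hΦ hcard
  have hdual (i j : ι) : affForm (α i) (m i) (b j) = if j = i then 1 else 0 := by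
    rw [← hb, b.repr_self_apply]
  have hΦα (i : ι) : affForm (α i) (m i) (coroot (α i), 0) = 2 := by
    rw [affForm_apply, mul_zero, sub_zero, inner_coroot_self (hΦ.ne_zero _ (hα.mem i))]
  have hαH (i : ι) : coroot (α i) ∈ H :=
    (mem_of_prod_preReflection_mem_displacing (Q := ⊥) (a := fun i => (coroot (α i), 0)) bot_le hΦα
      (fun i _ => hΦ.isRootSet.homRefl_mem_homCoweightLattice (hα.mem i) (m i))
      (fun i _ => exists_affForm_eq_int (hα.mem i) (m i))
      (by rintro i q rfl; exact map_zero _) hnodup hprod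
      (fun j _ => ⟨b j, hα.dual_basis_mem_homCoweightLattice hΦ hb j, by simp [hdual],
        fun i _ hij => by simp [hdual, hij.symm]⟩) i (hl i)).1
  have hle : AddSubgroup.closure (Set.range fun i => coroot (α i)) ≤ H := by
    rw [AddSubgroup.closure_le]
    rintro _ ⟨i, rfl⟩
    exact hαH i
  exact hle (hα.coroot_mem_closure_range hΦ.isRootSet hg)

theorem exists_weight_dual [DecidableEq ι] (hα : GeneratesAffWeylGroup Φ α m)
    (hΦ : IsCrystRootSystem Φ) {b : Module.Basis ι ℝ (V × ℝ)}
    (hb : ∀ x i, b.repr x i = affForm (α i) (m i) x) (j : ι) :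
    ∃ x ∈ coweightLattice (coroot '' Φ), ∃ c : ℝ, (∀ g ∈ Φ, ∃ z : ℤ, c = z * (⟪g, g⟫ / 2)) ∧
      ∀ i, ⟪x, coroot (α i)⟫ • α i =
        (if i = j then α j else 0) + (m i * c) • coroot (α i) := by
  set y : V × ℝ := (⟪α j, α j⟫ / 2) • b j with hy
  have haff (i : ι) : affForm (α i) (m i) y • coroot (α i) = if i = j then α j else 0 := by
    rw [hy, map_smul, ← hb, b.repr_self_apply]
    rcases eq_or_ne i j with rfl | hij
    · rw [if_pos rfl, if_pos rfl, smul_eq_mul, mul_one,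
        half_inner_self_smul_coroot (hΦ.ne_zero _ (hα.mem i))]
    · simp [hij, hij.symm]
  have hroot (i : ι) (y : V) (hy : y ∈ AddSubgroup.closure Φ) :
      rootRefl (α i) y ∈ AddSubgroup.closure Φ :=
    rootRefl_mem_closure (fun c hc => AddSubgroup.subset_closure
      (hΦ.isRootSet.rootRefl_mem _ (hα.mem i) c hc)) hy
  have hint (g : V) (hg : g ∈ Φ) (r : ℤ) : ∃ z : ℤ, affForm g r y * (2 / ⟪g, g⟫) = z := by
    refine hΦ.isRootSet.exists_int_of_smul_mem_closure hg ?_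
    rw [mul_smul]
    refine hα.affForm_smul_coroot_mem hroot (fun i => ?_) hg r
    rw [haff]
    split_ifs
    · exact AddSubgroup.subset_closure (hα.mem j)
    · exact zero_mem _
  refine ⟨y.1, mem_coweightLattice_coroots hint, y.2, fun g hg =>
    exists_height_eq_int_mul (hΦ.ne_zero g hg) (hint g hg), fun i => ?_⟩
  rw [← haff i, ← add_smul, affForm_apply, sub_add_cancel, coroot, real_inner_smul_right,
    smul_smul, mul_comm]

theorem mem_of_prod_mem_displacing [Fintype ι] (hα : GeneratesAffWeylGroup Φ α m)
    (hΦ : IsCrystRootSystem Φ) (hirr : IsIrreducibleRS Φ)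
    (hcard : Fintype.card ι = Module.finrank ℝ V + 1) {l : List ι} (hnodup : l.Nodup)
    (hl : ∀ i, i ∈ l) {H : AddSubgroup V} (hlong : longRoots Φ ⊆ H)
    (hprod : (l.map fun i => linRefl (α i)).prod ∈
      displacing (coweightLattice (coroot '' Φ)) H) (hg : g ∈ Φ) : g ∈ H := by
  classical
  obtain ⟨b, hb⟩ := hα.exists_dual_basis hΦ hcard
  obtain ⟨d, hd⟩ := hΦ.longRoots_nonempty
  set Q := AddSubgroup.closure (longRoots Φ)
  have hQ (i : ι) (q : V) (hq : q ∈ Q) : linRefl (α i) q ∈ Q := by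
    rw [linRefl_apply]
    exact rootRefl_mem_closure (fun c hc => AddSubgroup.subset_closure
      (hΦ.isRootSet.rootRefl_mem_longRoots (hα.mem i) hc)) hq
  have hdual (j : ι) : ∃ x ∈ coweightLattice (coroot '' Φ), ∀ i,
      ⟪coroot (α i), x⟫ • α i - (if i = j then α j else 0) ∈ Q := by
    obtain ⟨x, hx, c, hc, hxα⟩ := hα.exists_weight_dual hΦ hb j
    obtain ⟨z, rfl⟩ := hc d hd.1
    refine ⟨x, hx, fun i => ?_⟩
    rw [real_inner_comm, hxα, add_sub_cancel_left, ← mul_assoc, mul_smul, ← Int.cast_mul,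
      Int.cast_smul_eq_zsmul]
    exact zsmul_mem (hΦ.isRootSet.half_smul_coroot_mem_closure_longRoots hirr (hα.mem i) hd) _
  have hαH (i : ι) : α i ∈ H :=
    mem_of_prod_preReflection_mem_displacing ((AddSubgroup.closure_le H).mpr hlong)
      (fun i => inner_coroot_self (hΦ.ne_zero _ (hα.mem i)))
      (fun i _ => hΦ.isRootSet.linRefl_mem_coweightLattice (hα.mem i))
      (fun i x hx => by simpa [real_inner_comm] using hx _ ⟨_, hα.mem i, rfl⟩) hQ hnodup hprod
      (fun j _ => by
        obtain ⟨x, hx, hxα⟩ := hdual j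
        exact ⟨x, hx, by simpa using hxα j, fun i _ hij => by simpa [hij] using hxα i⟩) i (hl i)
  have hle : AddSubgroup.closure (Set.range α) ≤ H := by
    rw [AddSubgroup.closure_le]
    rintro _ ⟨i, rfl⟩
    exact hαH i
  exact hle (hα.mem_closure_range hΦ hcard hg)

theorem subset_of_prod_eq [Fintype ι] (hα : GeneratesAffWeylGroup Φ α m)
    (hΦ : IsCrystRootSystem Φ) (hirr : IsIrreducibleRS Φ)
    (hcard : Fintype.card ι = Module.finrank ℝ V + 1) {l : List ι} (hnodup : l.Nodup)
    (hl : ∀ i, i ∈ l) {Ψ : Set V} (hΨ : IsRootSet Ψ) (hsub : Ψ ⊆ Φ) {κ : Type*} {β : κ → V}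
    (hβ : ∀ i, β i ∈ Ψ) {k : κ → ℤ} {l' : List κ}
    (hprod : (l.map fun i => sAff (α i) (m i)).prod = (l'.map fun i => sAff (β i) (k i)).prod) :
    Φ ⊆ Ψ := by
  have hhom : (l.map fun i => homRefl (α i) (m i)).prod =
      (l'.map fun i => homRefl (β i) (k i)).prod :=
    (IsHomogenization.list_prod α (fun i => m i) l).unique
      (hprod ▸ IsHomogenization.list_prod β (fun i => k i) l')
  have hlin : (l.map fun i => linRefl (α i)).prod = (l'.map fun i => linRefl (β i)).prod := by
    ext v
    have hv := congrArg (fun A : Module.End ℝ (V × ℝ) => (A (v, 0)).1) hhom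
    simpa only [prod_homRefl_apply_zero β fun i => (k i : ℝ),
      prod_homRefl_apply_zero α fun i => (m i : ℝ)] using hv
  have hcoroot (g : V) (hg : g ∈ Φ) : coroot g ∈ AddSubgroup.closure (coroot '' Ψ) := by
    refine hα.coroot_mem_of_prod_mem_displacing hΦ hcard hnodup hl ?_ hg
    rw [hhom]
    exact Submonoid.list_prod_mem _ (List.forall_mem_map.mpr fun i _ =>
      hΦ.isRootSet.homRefl_mem_displacing (hsub (hβ i)) (k i)
        (AddSubgroup.subset_closure ⟨_, hβ i, rfl⟩))
  have hlong : longRoots Φ ⊆ Ψ := fun g hg =>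
    hΨ.mem_of_coroot_mem_closure hsub hg (hΦ.ne_zero g hg.1) (hcoroot g hg.1)
  have hroot : Φ ⊆ AddSubgroup.closure Ψ := by
    intro g hg
    refine hα.mem_of_prod_mem_displacing hΦ hirr hcard hnodup hl
      (hlong.trans AddSubgroup.subset_closure) ?_ hg
    rw [hlin]
    exact Submonoid.list_prod_mem _ (List.forall_mem_map.mpr fun i _ =>
      hΦ.isRootSet.linRefl_mem_displacing (hsub (hβ i)) (AddSubgroup.subset_closure (hβ i)))
  exact hΦ.isRootSet.subset_of_subset_closure hirr hΨ hsub hlong hroot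

end GeneratesAffWeylGroup

theorem IsQuasiCoxeterAff.exists_generatesAffWeylGroup {Φ : Set V} {n : ℕ} {w : Equiv.Perm V}
    (hqc : IsQuasiCoxeterAff Φ n w) :
    ∃ (α : Fin (n + 1) → V) (m : Fin (n + 1) → ℤ), GeneratesAffWeylGroup Φ α m ∧
      (List.ofFn fun i => sAff (α i) (m i)).prod = w := by
  obtain ⟨t, ht, hprod, -, hgen⟩ := hqc
  choose α hα m hm using ht
  obtain rfl : t = fun i => sAff (α i) (m i) := funext hm
  exact ⟨α, m, ⟨hα, hgen⟩, hprod⟩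

theorem statement_18_general (Φ : Set V) (hΦ : IsCrystRootSystem Φ) (hirr : IsIrreducibleRS Φ)
    (n : ℕ) (hrank : Module.finrank ℝ V = n)
    (w : Equiv.Perm V) (hqc : IsQuasiCoxeterAff Φ n w)
    {N : ℕ} (β : Fin N → V) (hβ : ∀ i, β i ∈ Φ) (k : Fin N → ℤ)
    (hfac : (List.ofFn fun i => sAff (β i) (k i : ℝ)).prod = w) :
    Subgroup.closure (Set.range fun i => sAff (β i) 0) = WeylGroup Φ := by
  obtain ⟨α, m, hα, hprod⟩ := hqc.exists_generatesAffWeylGroup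
  set G := Subgroup.closure (Set.range fun i => sAff (β i) 0)
  have hβG (i : Fin N) : β i ∈ rootsIn Φ G := ⟨hβ i, Subgroup.subset_closure ⟨i, rfl⟩⟩
  have hΦG : Φ ⊆ rootsIn Φ G := by
    refine hα.subset_of_prod_eq hΦ hirr (by rw [Fintype.card_fin, hrank])
      (List.nodup_finRange (n + 1)) List.mem_finRange (hΦ.isRootSet.rootsIn G)
      (Set.sep_subset _ _) hβG (k := k) (l' := List.finRange N) ?_
    rw [← List.ofFn_eq_map, ← List.ofFn_eq_map, hprod, hfac]
  refine le_antisymm ((Subgroup.closure_le _).mpr ?_) ((Subgroup.closure_le _).mpr ?_)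
  · rintro _ ⟨i, rfl⟩
    exact Subgroup.subset_closure ⟨β i, hβ i, rfl⟩
  · rintro _ ⟨a, ha, rfl⟩
    exact (hΦG ha).2

theorem statement_18 (Φ : Set V) (hΦ : IsCrystRootSystem Φ) (hirr : IsIrreducibleRS Φ)
    (n : ℕ) (hrank : Module.finrank ℝ V = n)
    (w : Equiv.Perm V) (hw : w ∈ AffWeylGroup Φ) (hqc : IsQuasiCoxeterAff Φ n w)
    (β : Fin (n + 1) → V) (hβ : ∀ i, β i ∈ Φ) (k : Fin (n + 1) → ℤ)
    (hfac : (List.ofFn fun i => sAff (β i) (k i : ℝ)).prod = w)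
    (hred : n + 1 = reflLength (AffReflections Φ) w) :
    Subgroup.closure (Set.range fun i => sAff (β i) 0) = WeylGroup Φ :=
  statement_18_general Φ hΦ hirr n hrank w hqc β hβ k hfac

end
end

section
/- Let Φ be an irreducible crystallographic root system of rank n, W the associated affine Weyl group with set of reflections T, W_0 = W_Φ with set of reflections T_0, and p : W → W_0 the projection s_{α,k} ↦ s_α. Let w ∈ W be a quasi-Coxeter element for (W,T) and set w' := p(w). Then the Hurwitz action of the braid group B_{n+1} is transitive on the set Fac_{T_0,n+1}(w') := {(t_1,…,t_{n+1}) ∈ T_0^{n+1} | t_1⋯t_{n+1} = w' and ⟨t_1,…,t_{n+1}⟩ = W_0}. -/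
open scoped RealInnerProductSpace

noncomputable section

variable {V : Type*} [NormedAddCommGroup V] [InnerProductSpace ℝ V]

/-- The set of reflections `{s_α | α ∈ Φ}` of the finite Weyl group of `Φ`. -/
def FinReflections (Φ : Set V) : Set (Equiv.Perm V) :=
  {g | ∃ α ∈ Φ, g = sAff α 0}

/-!
Represent a tuple of reflections by a tuple of roots `β₁, …, βₖ`, and attach integer weights `cᵢ` to
it. A Hurwitz move that carries `cβ` past a block reflects the block in `β`, and adjusting `c` by a
Cartan number keeps `∑ cᵢ βᵢ` fixed. Moving the longest weighted vector past a suitable block lowers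
`∑ |cᵢ|`, unless its reflection occurs twice or its inner product with the weighted sum is at least
its squared length.

Applied to an integer relation, which a dependent tuple of roots has because its Cartan matrix is
integral, this descent yields a repeated reflection; so a generating tuple of length `n + 1` becomes
`(x, x, m)` with `(x, m)` linearly independent. Applied to the integral expression of a root `α` in
a linearly independent tuple, it stops at a multiple of `α`, because the coroot of `α` has integral
coefficients too; so every reflection in the group generated by the tuple can be moved to the front.
By induction two linearly independent tuples with equal products are equivalent if one of them
generates a parabolic subgroup.

Given `(x, x, m)` and `(y, y, m')` with equal products, `m` and `m'` are therefore equivalent. As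
`(x, m)` and `(y, m)` both generate the Weyl group, `x` and `y` have the same length and agree up to
sign modulo the span of `m`. The pair `(x, x)` can be conjugated by the group generated by `m`, and
averaging over the orbit of `x` gives a conjugate `z` with `⟪z, y⟫ > 0`; then `z = y`, or `z - y` is
a root whose reflection exchanges `z` and `y` and lies in that group.
-/

section Group

variable {G : Type*} [Group G]

theorem conj_mul_conj_eq_one {s : G} (hs : s * s = 1) (g : G) :
    (g * s * g⁻¹) * (g * s * g⁻¹) = 1 := by
  rw [conj_mul, hs, mul_one, mul_inv_cancel]

namespace HurwitzEquiv

protected theorem refl (l : List G) : HurwitzEquiv l l := Relation.EqvGen.refl l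

protected theorem symm {l l' : List G} (h : HurwitzEquiv l l') : HurwitzEquiv l' l :=
  Relation.EqvGen.symm _ _ h

protected theorem trans {l₁ l₂ l₃ : List G} (h : HurwitzEquiv l₁ l₂) (h' : HurwitzEquiv l₂ l₃) :
    HurwitzEquiv l₁ l₃ :=
  Relation.EqvGen.trans _ _ _ h h'

theorem append_append (u v : List G) {l l' : List G} (h : HurwitzEquiv l l') :
    HurwitzEquiv (u ++ l ++ v) (u ++ l' ++ v) := by
  induction h with
  | rel _ _ h =>
    obtain ⟨x, y, a, b, rfl, rfl⟩ := h
    exact .rel _ _ ⟨u ++ x, y ++ v, a, b, by simp, by simp⟩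
  | refl => exact .refl _
  | symm _ _ _ ih => exact ih.symm
  | trans _ _ _ _ _ ih ih' => exact ih.trans ih'

theorem append_left (u : List G) {l l' : List G} (h : HurwitzEquiv l l') :
    HurwitzEquiv (u ++ l) (u ++ l') := by
  simpa only [List.append_nil] using h.append_append u []

theorem append_right (v : List G) {l l' : List G} (h : HurwitzEquiv l l') :
    HurwitzEquiv (l ++ v) (l' ++ v) :=
  h.append_append [] v

theorem cons (a : G) {l l' : List G} (h : HurwitzEquiv l l') :
    HurwitzEquiv (a :: l) (a :: l') :=
  h.append_left [a]

theorem length_eq {l l' : List G} (h : HurwitzEquiv l l') : l.length = l'.length := by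
  induction h with
  | rel _ _ h => obtain ⟨u, v, a, b, rfl, rfl⟩ := h; simp
  | refl => rfl
  | symm _ _ _ ih => exact ih.symm
  | trans _ _ _ _ _ ih ih' => exact ih.trans ih'

theorem prod_eq {l l' : List G} (h : HurwitzEquiv l l') : l.prod = l'.prod := by
  induction h with
  | rel _ _ h => obtain ⟨u, v, a, b, rfl, rfl⟩ := h; simp [mul_assoc]
  | refl => rfl
  | symm _ _ _ ih => exact ih.symm
  | trans _ _ _ _ _ ih ih' => exact ih.trans ih'

theorem forall_mem_iff {T : Set G} (hT : ∀ a ∈ T, ∀ b ∈ T, a * b * a⁻¹ ∈ T ∧ a⁻¹ * b * a ∈ T)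
    {l l' : List G} (h : HurwitzEquiv l l') : (∀ g ∈ l, g ∈ T) ↔ ∀ g ∈ l', g ∈ T := by
  induction h with
  | rel _ _ h =>
    obtain ⟨u, v, a, b, rfl, rfl⟩ := h
    have swap : a ∈ T ∧ b ∈ T ↔ a * b * a⁻¹ ∈ T ∧ a ∈ T :=
      ⟨fun ⟨ha, hb⟩ => ⟨(hT a ha b hb).1, ha⟩,
        fun ⟨hab, ha⟩ => ⟨ha, by simpa [mul_assoc] using (hT a ha _ hab).2⟩⟩
    simp only [List.forall_mem_append, List.forall_mem_cons, ← and_assoc]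
    rw [and_assoc (a := ∀ g ∈ u, g ∈ T), swap]
    simp only [and_assoc]
  | refl => rfl
  | symm _ _ _ ih => exact ih.symm
  | trans _ _ _ _ _ ih ih' => exact ih.trans ih'

theorem closure_eq {l l' : List G} (h : HurwitzEquiv l l') :
    Subgroup.closure {g | g ∈ l} = Subgroup.closure {g | g ∈ l'} := by
  have conj_mem (H : Subgroup G) : ∀ a ∈ (H : Set G), ∀ b ∈ (H : Set G),
      a * b * a⁻¹ ∈ (H : Set G) ∧ a⁻¹ * b * a ∈ (H : Set G) := fun a ha b hb =>
    ⟨mul_mem (mul_mem ha hb) (inv_mem ha), mul_mem (mul_mem (inv_mem ha) hb) ha⟩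
  refine eq_of_forall_ge_iff fun H => ?_
  rw [Subgroup.closure_le, Subgroup.closure_le]
  exact h.forall_mem_iff (conj_mem H)

theorem swap (a b : G) : HurwitzEquiv [a, b] [a * b * a⁻¹, a] :=
  .rel _ _ ⟨[], [], a, b, rfl, rfl⟩

theorem cons_append_conj (a : G) (v : List G) :
    HurwitzEquiv (a :: v) (v.map (fun b => a * b * a⁻¹) ++ [a]) := by
  induction v with
  | nil => exact .refl _
  | cons b v ih => exact ((swap a b).append_right v).trans (ih.cons _)

theorem append_cons_conj (a : G) (v : List G) :
    HurwitzEquiv (v ++ [a]) (a :: v.map (fun b => a⁻¹ * b * a)) := by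
  simpa [Function.comp_def, mul_assoc] using
    (cons_append_conj a (v.map fun b => a⁻¹ * b * a)).symm

theorem exists_cons_of_mem {a : G} {l : List G} (ha : a ∈ l) :
    ∃ m, HurwitzEquiv l (a :: m) := by
  obtain ⟨u, v, rfl⟩ := List.append_of_mem ha
  exact ⟨_, by simpa using (append_cons_conj a u).append_right v⟩

theorem exists_cons_cons_of_mem {a : G} {u v : List G} (ha : a ∈ u ++ v) :
    ∃ m, HurwitzEquiv (u ++ a :: v) (a :: a :: m) := by
  have of_mem_right {u v : List G} (hv : a ∈ v) :
      ∃ m, HurwitzEquiv (u ++ a :: v) (a :: a :: m) := by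
    obtain ⟨m, hm⟩ := exists_cons_of_mem
      (List.mem_append_right (u.map fun b => a⁻¹ * b * a) hv)
    exact ⟨m, .trans (by simpa using (append_cons_conj a u).append_right v) (hm.cons a)⟩
  rcases List.mem_append.1 ha with hu | hv
  · obtain ⟨u₁, u₂, rfl⟩ := List.append_of_mem hu
    simpa using of_mem_right (u := u₁) (v := u₂ ++ a :: v) (by simp)
  · exact of_mem_right hv

theorem pair_comm {s : G} (hs : s * s = 1) (u : List G) :
    HurwitzEquiv (s :: s :: u) (u ++ [s, s]) := by
  have hs' : s⁻¹ = s := inv_eq_of_mul_eq_one_left hs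
  have h := ((cons_append_conj s u).cons s).trans
    ((cons_append_conj s (u.map fun b => s * b * s⁻¹)).append_right [s])
  simpa [Function.comp_def, hs', ← mul_assoc, hs, mul_assoc _ s s] using h

theorem conj_pair_of_mem {s : G} (hs : s * s = 1) {b : G} {m : List G} (hb : b ∈ m) :
    HurwitzEquiv (s :: s :: m) (b * s * b⁻¹ :: b * s * b⁻¹ :: m) := by
  obtain ⟨u, v, rfl⟩ := List.append_of_mem hb
  have to_b := (pair_comm hs u).append_right (b :: v)
  have past_b := ((pair_comm hs [b]).trans (cons_append_conj b [s, s])).append_append u v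
  have back := (pair_comm (conj_mul_conj_eq_one hs b) u).symm.append_right (b :: v)
  simp only [List.append_assoc, List.cons_append, List.nil_append, List.map_cons,
    List.map_nil] at to_b past_b back
  exact to_b.trans (past_b.trans back)

theorem conj_pair {s g : G} (hs : s * s = 1) {m : List G}
    (hg : g ∈ Subgroup.closure {x | x ∈ m}) :
    HurwitzEquiv (s :: s :: m) (g * s * g⁻¹ :: g * s * g⁻¹ :: m) := by
  induction hg using Subgroup.closure_induction generalizing s with
  | mem b hb => exact conj_pair_of_mem hs hb
  | one => simpa using HurwitzEquiv.refl _
  | mul a b _ _ iha ihb =>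
    simpa [mul_assoc] using (ihb hs).trans (iha (conj_mul_conj_eq_one hs b))
  | inv a _ ih =>
    simpa [mul_assoc] using (ih (conj_mul_conj_eq_one hs a⁻¹)).symm

end HurwitzEquiv

end Group

section Reflection

theorem sAff_zero_apply (β v : V) : sAff β 0 v = v - (2 * ⟪v, β⟫ / ⟪β, β⟫) • β := by
  simp only [sAff, Function.Involutive.coe_toPerm, sAffFun, coroot, smul_smul, sub_zero]
  congr 2
  ring

theorem sAff_zero_eq_reflection (β v : V) : sAff β 0 v = (ℝ ∙ β)ᗮ.reflection v := by
  rw [sAff_zero_apply, Submodule.reflection_orthogonal_apply, Submodule.reflection_singleton_apply,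
    RCLike.ofReal_real_eq_id, id, ← real_inner_self_eq_norm_sq, real_inner_comm]
  module

theorem sAff_sAff_zero (β v : V) : sAff β 0 (sAff β 0 v) = v := sAffFun_involutive β 0 v

theorem inv_sAff (β : V) (k : ℝ) : (sAff β k)⁻¹ = sAff β k := rfl

theorem sAff_mul_self (β : V) (k : ℝ) : sAff β k * sAff β k = 1 :=
  mul_eq_one_iff_eq_inv.2 (inv_sAff β k).symm

theorem inner_sAff_zero (β v w : V) : ⟪sAff β 0 v, sAff β 0 w⟫ = ⟪v, w⟫ := by
  simp only [sAff_zero_eq_reflection, LinearIsometryEquiv.inner_map_map]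

theorem inner_sAff_zero_left (β v w : V) : ⟪sAff β 0 v, w⟫ = ⟪v, sAff β 0 w⟫ := by
  rw [← inner_sAff_zero β, sAff_sAff_zero]

theorem sAff_sAff_zero_eq_conj (β γ : V) :
    sAff (sAff β 0 γ) 0 = sAff β 0 * sAff γ 0 * (sAff β 0)⁻¹ := by
  ext v
  rw [inv_sAff, Equiv.Perm.mul_apply, Equiv.Perm.mul_apply, sAff_zero_apply γ,
    sAff_zero_apply (sAff β 0 γ), inner_sAff_zero, inner_sAff_zero_left β v]
  simp only [sAff_zero_eq_reflection, map_sub, map_smul, Submodule.reflection_reflection]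

theorem sAff_smul_zero {c : ℝ} (hc : c ≠ 0) (β : V) : sAff (c • β) 0 = sAff β 0 := by
  ext v
  simp only [sAff_zero_eq_reflection, Submodule.span_singleton_smul_eq hc.isUnit β]

theorem sAff_neg_zero (β : V) : sAff (-β) 0 = sAff β 0 := by
  simpa using sAff_smul_zero (neg_ne_zero.2 one_ne_zero) β

theorem sAff_zero_eq_of_norm_mul_norm_le {x y : V} (hx : x ≠ 0) (hy : y ≠ 0)
    (h : ‖x‖ * ‖y‖ ≤ |⟪x, y⟫|) : sAff x 0 = sAff y 0 := by
  have cauchy_eq : ‖⟪x, y⟫‖ = ‖x‖ * ‖y‖ := le_antisymm (norm_inner_le_norm x y) h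
  have parallel : x = 0 ∨ ∃ r : ℝ, y = r • x :=
    ((norm_inner_eq_norm_tfae ℝ x y).out 0 2).1 cauchy_eq
  obtain ⟨r, rfl⟩ := parallel.resolve_left hx
  exact (sAff_smul_zero (left_ne_zero_of_smul hy) x).symm

theorem sAff_zero_eq_self_iff (β v : V) : sAff β 0 v = v ↔ ⟪v, β⟫ = 0 := by
  rw [sAff_zero_eq_reflection, Submodule.reflection_eq_self_iff,
    Submodule.mem_orthogonal_singleton_iff_inner_left]

theorem sAff_sub_zero_apply {v w : V} (h : ‖v‖ = ‖w‖) : sAff (v - w) 0 v = w := by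
  rw [sAff_zero_eq_reflection, Submodule.reflection_sub h]

theorem coroot_sAff_zero (β γ : V) : coroot (sAff β 0 γ) = sAff β 0 (coroot γ) := by
  rw [coroot, inner_sAff_zero, coroot, sAff_zero_eq_reflection, sAff_zero_eq_reflection, map_smul]

/-- The reflections `s_α` for `α` running through a list of vectors. Throughout, a tuple of
reflections is handled through a list of roots inducing it. -/
def reflections (l : List V) : List (Equiv.Perm V) := l.map fun α => sAff α 0

@[simp] theorem reflections_nil : reflections ([] : List V) = [] := rfl

@[simp] theorem reflections_cons (α : V) (l : List V) :
    reflections (α :: l) = sAff α 0 :: reflections l := rfl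

@[simp] theorem reflections_append (l m : List V) :
    reflections (l ++ m) = reflections l ++ reflections m := List.map_append

@[simp] theorem length_reflections (l : List V) : (reflections l).length = l.length :=
  List.length_map _

theorem reflections_map_sAff_zero (β : V) (l : List V) :
    reflections (l.map (sAff β 0)) =
      (reflections l).map (fun g => sAff β 0 * g * (sAff β 0)⁻¹) := by
  simp [reflections, Function.comp_def, sAff_sAff_zero_eq_conj]

/-- The group generated by the reflections `s_α` for `α` in a list of vectors. -/
def reflectionGroup (l : List V) : Subgroup (Equiv.Perm V) :=
  Subgroup.closure {g | g ∈ reflections l}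

theorem sAff_mem_reflectionGroup {l : List V} {α : V} (hα : α ∈ l) :
    sAff α 0 ∈ reflectionGroup l :=
  Subgroup.subset_closure (List.mem_map.2 ⟨α, hα, rfl⟩)

theorem reflectionGroup_le_iff {l : List V} {H : Subgroup (Equiv.Perm V)} :
    reflectionGroup l ≤ H ↔ ∀ α ∈ l, sAff α 0 ∈ H := by
  simp [reflectionGroup, Subgroup.closure_le, Set.subset_def, reflections]

theorem HurwitzEquiv.reflectionGroup_eq {l l' : List V}
    (h : HurwitzEquiv (reflections l) (reflections l')) : reflectionGroup l = reflectionGroup l' :=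
  h.closure_eq

end Reflection

/-- A reflection-stable set of nonzero vectors with integral Cartan numbers: the part of the
definition of a crystallographic root system that is inherited by reflection subsystems. -/
structure IsCrystRootSet (Ψ : Set V) : Prop where
  ne_zero : ∀ α ∈ Ψ, α ≠ 0
  sAff_mem : ∀ α ∈ Ψ, ∀ β ∈ Ψ, sAff α 0 β ∈ Ψ
  cartan_int : ∀ α ∈ Ψ, ∀ β ∈ Ψ, ∃ n : ℤ, n * ⟪α, α⟫ = 2 * ⟪β, α⟫

theorem IsCrystRootSystem.isCrystRootSet {Φ : Set V} (hΦ : IsCrystRootSystem Φ) :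
    IsCrystRootSet Φ where
  ne_zero := hΦ.ne_zero
  sAff_mem := hΦ.refl_mem
  cartan_int α hα β hβ := by
    obtain ⟨n, hn⟩ := hΦ.cryst α hα β hβ
    exact ⟨n, by rw [← hn, div_mul_cancel₀ _ (inner_self_ne_zero.2 (hΦ.ne_zero α hα))]⟩

theorem sAff_zero_apply_of_mul_inner_self_eq {β v : V} (hβ : β ≠ 0) {n : ℤ}
    (hn : n * ⟪β, β⟫ = 2 * ⟪v, β⟫) : sAff β 0 v = v - n • β := by
  rw [sAff_zero_apply, ← hn, mul_div_cancel_right₀ _ (inner_self_ne_zero.2 hβ),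
    Int.cast_smul_eq_zsmul]

namespace IsCrystRootSet

variable {Ψ : Set V}

theorem cartan_int_span (hΨ : IsCrystRootSet Ψ) {β : V} (hβ : β ∈ Ψ) {v : V}
    (hv : v ∈ Submodule.span ℤ Ψ) : ∃ n : ℤ, n * ⟪β, β⟫ = 2 * ⟪v, β⟫ := by
  induction hv using Submodule.span_induction with
  | mem v hv => exact hΨ.cartan_int β hβ v hv
  | zero => exact ⟨0, by simp⟩
  | add v w _ _ ihv ihw =>
    obtain ⟨⟨n, hn⟩, m, hm⟩ := And.intro ihv ihw
    exact ⟨n + m, by push_cast; rw [inner_add_left]; linear_combination hn + hm⟩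
  | smul a v _ ih =>
    obtain ⟨n, hn⟩ := ih
    refine ⟨a * n, ?_⟩
    rw [← Int.cast_smul_eq_zsmul ℝ, real_inner_smul_left]
    push_cast
    linear_combination a * hn

theorem neg_mem (hΨ : IsCrystRootSet Ψ) {α : V} (hα : α ∈ Ψ) : -α ∈ Ψ := by
  have h := hΨ.sAff_mem α hα α hα
  rwa [sAff_zero_eq_reflection, Submodule.reflection_orthogonalComplement_singleton_eq_neg] at h

theorem conj_mem_finReflections (hΨ : IsCrystRootSet Ψ) :
    ∀ a ∈ FinReflections Ψ, ∀ b ∈ FinReflections Ψ,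
      a * b * a⁻¹ ∈ FinReflections Ψ ∧ a⁻¹ * b * a ∈ FinReflections Ψ := by
  rintro _ ⟨α, hα, rfl⟩ _ ⟨β, hβ, rfl⟩
  have h : sAff α 0 * sAff β 0 * (sAff α 0)⁻¹ ∈ FinReflections Ψ :=
    ⟨_, hΨ.sAff_mem α hα β hβ, (sAff_sAff_zero_eq_conj α β).symm⟩
  exact ⟨h, h⟩

end IsCrystRootSet

theorem exists_reflections_eq {Φ : Set V} {t : List (Equiv.Perm V)}
    (ht : ∀ g ∈ t, g ∈ FinReflections Φ) : ∃ l : List V, (∀ x ∈ l, x ∈ Φ) ∧ reflections l = t := by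
  induction t with
  | nil => exact ⟨[], by simp⟩
  | cons g t ih =>
    obtain ⟨⟨α, hα, rfl⟩, ht'⟩ := List.forall_mem_cons.1 ht
    obtain ⟨l, hl, rfl⟩ := ih ht'
    exact ⟨α :: l, List.forall_mem_cons.2 ⟨hα, hl⟩, rfl⟩

namespace IsCrystRootSet

variable {Ψ : Set V} {l : List V}

theorem mem_finReflections_of_hurwitzEquiv (hΨ : IsCrystRootSet Ψ) (hl : ∀ x ∈ l, x ∈ Ψ)
    {t : List (Equiv.Perm V)} (h : HurwitzEquiv (reflections l) t) :
    ∀ g ∈ t, g ∈ FinReflections Ψ :=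
  (h.forall_mem_iff hΨ.conj_mem_finReflections).1 <|
    List.forall_mem_map.2 fun x hx => ⟨x, hl x hx, rfl⟩

theorem exists_hurwitzEquiv_cons (hΨ : IsCrystRootSet Ψ) (hl : ∀ x ∈ l, x ∈ Ψ) {γ : V}
    (hγ : sAff γ 0 ∈ reflections l) :
    ∃ m : List V, (∀ x ∈ m, x ∈ Ψ) ∧ HurwitzEquiv (reflections l) (reflections (γ :: m)) := by
  obtain ⟨t, ht⟩ := HurwitzEquiv.exists_cons_of_mem hγ
  obtain ⟨m, hm, rfl⟩ := exists_reflections_eq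
    (List.forall_mem_cons.1 (hΨ.mem_finReflections_of_hurwitzEquiv hl ht)).2
  exact ⟨m, hm, ht⟩

theorem exists_hurwitzEquiv_cons_cons (hΨ : IsCrystRootSet Ψ) {u v : List V} {γ : V}
    (hl : ∀ x ∈ u ++ γ :: v, x ∈ Ψ) (hγ : sAff γ 0 ∈ reflections (u ++ v)) :
    ∃ m : List V, (∀ x ∈ m, x ∈ Ψ) ∧
      HurwitzEquiv (reflections (u ++ γ :: v)) (reflections (γ :: γ :: m)) := by
  obtain ⟨t, ht⟩ := HurwitzEquiv.exists_cons_cons_of_mem (reflections_append u v ▸ hγ)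
  have ht' : HurwitzEquiv (reflections (u ++ γ :: v)) (sAff γ 0 :: sAff γ 0 :: t) := by
    simpa using ht
  have mem_t : ∀ g ∈ t, g ∈ FinReflections Ψ := fun g hg =>
    hΨ.mem_finReflections_of_hurwitzEquiv hl ht' g (by simp [hg])
  obtain ⟨m, hm, rfl⟩ := exists_reflections_eq mem_t
  exact ⟨m, hm, ht'⟩

end IsCrystRootSet

section Descent

section Weights

variable {M : Type*} [AddCommGroup M]

/-- The vector `∑ cᵢ • βᵢ` represented by a list of integer-weighted vectors `(cᵢ, βᵢ)`. -/
def weightedSum (L : List (ℤ × M)) : M := (L.map fun p => p.1 • p.2).sum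

/-- The total weight `∑ |cᵢ|` of a list of integer-weighted vectors, which the descent decreases. -/
def totalWeight {ι : Type*} (L : List (ℤ × ι)) : ℕ := (L.map fun p => p.1.natAbs).sum

@[simp] theorem weightedSum_nil : weightedSum ([] : List (ℤ × M)) = 0 := rfl

@[simp] theorem weightedSum_cons (p : ℤ × M) (L : List (ℤ × M)) :
    weightedSum (p :: L) = p.1 • p.2 + weightedSum L := by simp [weightedSum]

@[simp] theorem weightedSum_append (L L' : List (ℤ × M)) :
    weightedSum (L ++ L') = weightedSum L + weightedSum L' := by simp [weightedSum]

@[simp] theorem totalWeight_nil {ι : Type*} : totalWeight ([] : List (ℤ × ι)) = 0 := rfl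

@[simp] theorem totalWeight_cons {ι : Type*} (p : ℤ × ι) (L : List (ℤ × ι)) :
    totalWeight (p :: L) = p.1.natAbs + totalWeight L := by simp [totalWeight]

@[simp] theorem totalWeight_append {ι : Type*} (L L' : List (ℤ × ι)) :
    totalWeight (L ++ L') = totalWeight L + totalWeight L' := by simp [totalWeight]

theorem weightedSum_mem_span {L : List (ℤ × M)} {S : Set M} (hL : ∀ p ∈ L, p.2 ∈ S) :
    weightedSum L ∈ Submodule.span ℤ S :=
  list_sum_mem <| List.forall_mem_map.2 fun p hp =>
    Submodule.smul_mem _ _ (Submodule.subset_span (hL p hp))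

theorem exists_weightedSum_eq_sum (l : List M) (c : Fin l.length → ℤ) :
    ∃ L : List (ℤ × M), L.map Prod.snd = l ∧ weightedSum L = ∑ i, c i • l.get i ∧
      ∀ i, (c i, l.get i) ∈ L := by
  refine ⟨List.ofFn fun i => (c i, l.get i), ?_, ?_, fun i => List.mem_ofFn.2 ⟨i, rfl⟩⟩
  · rw [List.map_ofFn]
    exact List.ofFn_get l
  · rw [weightedSum, List.map_ofFn, List.sum_ofFn]
    rfl

theorem totalWeight_eq_zero_iff {ι : Type*} {L : List (ℤ × ι)} :
    totalWeight L = 0 ↔ ∀ p ∈ L, p.1 = 0 := by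
  rw [totalWeight, List.sum_eq_zero_iff, List.forall_mem_map]
  simp only [Int.natAbs_eq_zero]

theorem exists_weight_ne_zero {ι : Type*} {L : List (ℤ × ι)} (hL : totalWeight L ≠ 0) :
    ∃ p ∈ L, p.1 ≠ 0 := by
  rw [Ne, totalWeight_eq_zero_iff] at hL
  push Not at hL
  exact hL

theorem totalWeight_ne_zero {L : List (ℤ × M)} (hL : weightedSum L ≠ 0) : totalWeight L ≠ 0 := by
  contrapose! hL
  rw [totalWeight_eq_zero_iff] at hL
  exact List.sum_eq_zero <| List.forall_mem_map.2 fun p hp => by rw [hL p hp, zero_smul]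

end Weights

theorem inner_weightedSum (L : List (ℤ × V)) (β : V) :
    ⟪weightedSum L, β⟫ = (L.map fun p => ⟪p.1 • p.2, β⟫).sum := by
  induction L with
  | nil => simp [weightedSum]
  | cons p L ih => simp [inner_add_left, ih]

/-- Reflect all vectors of a weighted list in `β`, keeping the weights. -/
def reflectBlock (β : V) (L : List (ℤ × V)) : List (ℤ × V) := L.map fun p => (p.1, sAff β 0 p.2)

theorem weightedSum_reflectBlock (β : V) (L : List (ℤ × V)) :
    weightedSum (reflectBlock β L) = sAff β 0 (weightedSum L) := by
  rw [sAff_zero_eq_reflection, weightedSum, weightedSum, map_list_sum]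
  simp [reflectBlock, Function.comp_def, sAff_zero_eq_reflection]

theorem totalWeight_reflectBlock (β : V) (L : List (ℤ × V)) :
    totalWeight (reflectBlock β L) = totalWeight L := by
  simp [totalWeight, reflectBlock, Function.comp_def]

theorem reflections_reflectBlock (β : V) (L : List (ℤ × V)) :
    reflections ((reflectBlock β L).map Prod.snd) =
      (reflections (L.map Prod.snd)).map fun g => sAff β 0 * g * (sAff β 0)⁻¹ := by
  rw [← reflections_map_sAff_zero]
  simp [reflectBlock, Function.comp_def]

theorem mem_reflectBlock {Ψ : Set V} (hΨ : IsCrystRootSet Ψ) {β : V} (hβ : β ∈ Ψ)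
    {L : List (ℤ × V)} (hL : ∀ p ∈ L, p.2 ∈ Ψ) : ∀ p ∈ reflectBlock β L, p.2 ∈ Ψ :=
  List.forall_mem_map.2 fun p hp => hΨ.sAff_mem β hβ _ (hL p hp)

/-- Two weighted lists of vectors with Hurwitz equivalent tuples of reflections and the same
weighted sum: the descent may replace the first by the second. The field `mem` goes in one direction
only, so this is a preorder. -/
structure WeightedEquiv (Ψ : Set V) (L L' : List (ℤ × V)) : Prop where
  hurwitz : HurwitzEquiv (reflections (L.map Prod.snd)) (reflections (L'.map Prod.snd))
  weightedSum_eq : weightedSum L = weightedSum L'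
  mem : (∀ p ∈ L, p.2 ∈ Ψ) → ∀ p ∈ L', p.2 ∈ Ψ

namespace WeightedEquiv

variable {Ψ : Set V} {L L₁ L₂ L₃ : List (ℤ × V)}

protected theorem refl (L : List (ℤ × V)) : WeightedEquiv Ψ L L := ⟨.refl _, rfl, id⟩

protected theorem trans (h : WeightedEquiv Ψ L₁ L₂) (h' : WeightedEquiv Ψ L₂ L₃) :
    WeightedEquiv Ψ L₁ L₃ :=
  ⟨h.hurwitz.trans h'.hurwitz, h.weightedSum_eq.trans h'.weightedSum_eq, h'.mem ∘ h.mem⟩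

theorem append_append (u v : List (ℤ × V)) (h : WeightedEquiv Ψ L₁ L₂) :
    WeightedEquiv Ψ (u ++ L₁ ++ v) (u ++ L₂ ++ v) where
  hurwitz := by simpa using h.hurwitz.append_append (reflections (u.map Prod.snd)) _
  weightedSum_eq := by simp [h.weightedSum_eq]
  mem := by
    simp only [List.forall_mem_append]
    exact fun ⟨⟨hu, h₁⟩, hv⟩ => ⟨⟨hu, h.mem h₁⟩, hv⟩

/-- Moving `β` to the right past a block reflects the block; the weight of `β` absorbs the change
of the weighted sum. -/
theorem move_right {β : V} (hΨ : IsCrystRootSet Ψ) (hβ : β ∈ Ψ) {n : ℤ} {v : List (ℤ × V)}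
    (hn : n * ⟪β, β⟫ = 2 * ⟪weightedSum v, β⟫) (c : ℤ) :
    WeightedEquiv Ψ ((c, β) :: v) (reflectBlock β v ++ [(c + n, β)]) where
  hurwitz := by
    simpa [reflections_reflectBlock] using HurwitzEquiv.cons_append_conj (sAff β 0) _
  weightedSum_eq := by
    rw [weightedSum_append, weightedSum_reflectBlock,
      sAff_zero_apply_of_mul_inner_self_eq (hΨ.ne_zero β hβ) hn, weightedSum_cons]
    simp only [weightedSum_cons, weightedSum_nil]
    module
  mem hL := by
    obtain ⟨-, hv⟩ := List.forall_mem_cons.1 hL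
    exact List.forall_mem_append.2 ⟨mem_reflectBlock hΨ hβ hv, by simpa using hβ⟩

theorem move_left {β : V} (hΨ : IsCrystRootSet Ψ) (hβ : β ∈ Ψ) {n : ℤ} {u : List (ℤ × V)}
    (hn : n * ⟪β, β⟫ = 2 * ⟪weightedSum u, β⟫) (c : ℤ) :
    WeightedEquiv Ψ (u ++ [(c, β)]) ((c + n, β) :: reflectBlock β u) where
  hurwitz := by
    simpa [reflections_reflectBlock, inv_sAff] using
      HurwitzEquiv.append_cons_conj (sAff β 0) (reflections (u.map Prod.snd))
  weightedSum_eq := by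
    rw [weightedSum_append, weightedSum_cons, weightedSum_cons, weightedSum_reflectBlock,
      sAff_zero_apply_of_mul_inner_self_eq (hΨ.ne_zero β hβ) hn]
    simp only [weightedSum_nil]
    module
  mem hL := by
    obtain ⟨hu, -⟩ := List.forall_mem_append.1 hL
    exact List.forall_mem_cons.2 ⟨hβ, mem_reflectBlock hΨ hβ hu⟩

end WeightedEquiv

theorem exists_prefix_sum_mem_Ioo {ι : Type*} (f : ι → ℝ) {K : ℝ} (l : List ι)
    (hneg : (l.map f).sum < 0) (hK : ∀ a ∈ l, -K < f a) :
    ∃ l₁ l₂, l = l₁ ++ l₂ ∧ (l₁.map f).sum ∈ Set.Ioo (-K) 0 := by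
  induction l using List.reverseRecOn with
  | nil => simp at hneg
  | append_singleton l a ih =>
    by_cases hl : (l.map f).sum < 0
    · obtain ⟨l₁, l₂, rfl, h⟩ := ih hl fun b hb => hK b (by simp [hb])
      exact ⟨l₁, l₂ ++ [a], by simp, h⟩
    · have ha := hK a (by simp)
      refine ⟨l ++ [a], [], by simp, ?_, hneg⟩
      simp only [List.map_append, List.sum_append, List.map_cons, List.map_nil, List.sum_singleton]
      linarith

theorem exists_suffix_sum_mem_Ioo {ι : Type*} (f : ι → ℝ) {K : ℝ} (l : List ι)
    (hneg : (l.map f).sum < 0) (hK : ∀ a ∈ l, -K < f a) :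
    ∃ l₁ l₂, l = l₁ ++ l₂ ∧ (l₂.map f).sum ∈ Set.Ioo (-K) 0 := by
  induction l with
  | nil => simp at hneg
  | cons a l ih =>
    by_cases hl : (l.map f).sum < 0
    · obtain ⟨l₁, l₂, rfl, h⟩ := ih hl fun b hb => hK b (by simp [hb])
      exact ⟨a :: l₁, l₂, rfl, h⟩
    · have ha := hK a (by simp)
      refine ⟨[], a :: l, rfl, ?_, hneg⟩
      simp only [List.map_cons, List.sum_cons]
      linarith

theorem natAbs_add_lt_natAbs {c n : ℤ} (hneg : c * n < 0) (hgt : -(2 * c ^ 2) < c * n) :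
    (c + n).natAbs < c.natAbs := by
  have hc : 0 < c ^ 2 := by
    have : c ≠ 0 := by rintro rfl; simp at hneg
    positivity
  have h : c ^ 2 * (n * (2 * c + n)) < 0 := by
    linear_combination mul_pos_of_neg_of_neg hneg (by linarith : -(2 * c ^ 2) - c * n < 0)
  have := neg_of_mul_neg_right h hc.le
  rw [Int.natAbs_lt_iff_sq_lt]
  linear_combination this

theorem neg_lt_mul_inner_smul {x β : V} {a c : ℤ} (hx : x ≠ 0) (hβ : β ≠ 0) (hc : c ≠ 0)
    (hle : a ^ 2 * ⟪x, x⟫ ≤ c ^ 2 * ⟪β, β⟫) (hne : sAff x 0 ≠ sAff β 0) :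
    -(c ^ 2 * ⟪β, β⟫) < c * ⟪a • x, β⟫ := by
  have smul_norm (b : ℤ) (y : V) : (b : ℝ) ^ 2 * ⟪y, y⟫ = (|(b : ℝ)| * ‖y‖) ^ 2 := by
    rw [mul_pow, sq_abs, real_inner_self_eq_norm_sq]
  have pos : 0 < (c : ℝ) ^ 2 * ⟪β, β⟫ :=
    mul_pos (by positivity) (real_inner_self_pos.2 hβ)
  rcases eq_or_ne a 0 with rfl | ha
  · simpa using pos
  have cauchy : |⟪x, β⟫| < ‖x‖ * ‖β‖ := by
    contrapose! hne
    exact sAff_zero_eq_of_norm_mul_norm_le hx hβ hne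
  have norm_le : |(a : ℝ)| * ‖x‖ ≤ |(c : ℝ)| * ‖β‖ := by
    rw [smul_norm, smul_norm] at hle
    exact (pow_le_pow_iff_left₀ (by positivity) (by positivity) two_ne_zero).1 hle
  refine (abs_lt.1 ?_).1
  calc |c * ⟪a • x, β⟫| = |(c : ℝ)| * |(a : ℝ)| * |⟪x, β⟫| := by
        rw [← Int.cast_smul_eq_zsmul ℝ, real_inner_smul_left, abs_mul, abs_mul, mul_assoc]
    _ < |(c : ℝ)| * |(a : ℝ)| * (‖x‖ * ‖β‖) := by gcongr
    _ = (|(a : ℝ)| * ‖x‖) * (|(c : ℝ)| * ‖β‖) := by ring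
    _ ≤ (|(c : ℝ)| * ‖β‖) * (|(c : ℝ)| * ‖β‖) := by gcongr
    _ = c ^ 2 * ⟪β, β⟫ := by rw [smul_norm, sq]

namespace IsCrystRootSet

variable {Ψ : Set V}

theorem exists_cartan_natAbs_add_lt (hΨ : IsCrystRootSet Ψ) {β w : V} (hβ : β ∈ Ψ)
    (hw : w ∈ Submodule.span ℤ Ψ) {c : ℤ}
    (h : c * ⟪w, β⟫ ∈ Set.Ioo (-(c ^ 2 * ⟪β, β⟫)) 0) :
    ∃ n : ℤ, n * ⟪β, β⟫ = 2 * ⟪w, β⟫ ∧ (c + n).natAbs < c.natAbs := by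
  obtain ⟨n, hn⟩ := hΨ.cartan_int_span hβ hw
  have pos : 0 < ⟪β, β⟫ := real_inner_self_pos.2 (hΨ.ne_zero β hβ)
  have scaled : (c * n : ℝ) * ⟪β, β⟫ = 2 * (c * ⟪w, β⟫) := by linear_combination c * hn
  have neg : (c * n : ℝ) < 0 := by
    refine neg_of_mul_neg_left ?_ pos.le
    linarith [h.2]
  have gt : -(2 * c ^ 2 : ℝ) < c * n := by
    refine lt_of_mul_lt_mul_right ?_ pos.le
    linarith [h.1]
  exact ⟨n, hn, natAbs_add_lt_natAbs (mod_cast neg) (mod_cast gt)⟩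

variable {u v : List (ℤ × V)} {c : ℤ} {β : V}

theorem exists_weightedEquiv_lt_right (hΨ : IsCrystRootSet Ψ) (hβ : β ∈ Ψ)
    (hv : ∀ p ∈ v, p.2 ∈ Ψ) (dominated : ∀ p ∈ v, -(c ^ 2 * ⟪β, β⟫) < c * ⟪p.1 • p.2, β⟫)
    (hneg : c * ⟪weightedSum v, β⟫ < 0) :
    ∃ L, WeightedEquiv Ψ ((c, β) :: v) L ∧ totalWeight L ≠ 0 ∧
      totalWeight L < totalWeight ((c, β) :: v) := by
  rw [inner_weightedSum, ← List.sum_map_mul_left] at hneg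
  obtain ⟨v₁, v₂, rfl, h⟩ := exists_prefix_sum_mem_Ioo _ v hneg dominated
  rw [List.sum_map_mul_left, ← inner_weightedSum] at h
  have hv₁ : weightedSum v₁ ∈ Submodule.span ℤ Ψ :=
    weightedSum_mem_span (List.forall_mem_append.1 hv).1
  obtain ⟨n, hn, hlt⟩ := hΨ.exists_cartan_natAbs_add_lt hβ hv₁ h
  have ne_zero : totalWeight v₁ ≠ 0 := totalWeight_ne_zero fun h0 => by simp [h0] at h
  refine ⟨_, by simpa using (WeightedEquiv.move_right hΨ hβ hn c).append_append [] v₂, ?_, ?_⟩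
  · simp only [totalWeight_append, totalWeight_reflectBlock]
    omega
  · simp only [totalWeight_append, totalWeight_cons, totalWeight_reflectBlock]
    omega

theorem exists_weightedEquiv_lt_left (hΨ : IsCrystRootSet Ψ) (hβ : β ∈ Ψ)
    (hu : ∀ p ∈ u, p.2 ∈ Ψ) (dominated : ∀ p ∈ u, -(c ^ 2 * ⟪β, β⟫) < c * ⟪p.1 • p.2, β⟫)
    (hneg : c * ⟪weightedSum u, β⟫ < 0) :
    ∃ L, WeightedEquiv Ψ (u ++ [(c, β)]) L ∧ totalWeight L ≠ 0 ∧
      totalWeight L < totalWeight (u ++ [(c, β)]) := by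
  rw [inner_weightedSum, ← List.sum_map_mul_left] at hneg
  obtain ⟨u₁, u₂, rfl, h⟩ := exists_suffix_sum_mem_Ioo _ u hneg dominated
  rw [List.sum_map_mul_left, ← inner_weightedSum] at h
  have hu₂ : weightedSum u₂ ∈ Submodule.span ℤ Ψ :=
    weightedSum_mem_span (List.forall_mem_append.1 hu).2
  obtain ⟨n, hn, hlt⟩ := hΨ.exists_cartan_natAbs_add_lt hβ hu₂ h
  have ne_zero : totalWeight u₂ ≠ 0 := totalWeight_ne_zero fun h0 => by simp [h0] at h
  refine ⟨_, by simpa using (WeightedEquiv.move_left hΨ hβ hn c).append_append u₁ [], ?_, ?_⟩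
  · simp only [totalWeight_append, totalWeight_cons, totalWeight_reflectBlock]
    omega
  · simp only [totalWeight_append, totalWeight_cons, totalWeight_reflectBlock]
    omega

theorem exists_weightedEquiv_lt (hΨ : IsCrystRootSet Ψ) (hL : ∀ p ∈ u ++ (c, β) :: v, p.2 ∈ Ψ)
    (dominated : ∀ p ∈ u ++ v, -(c ^ 2 * ⟪β, β⟫) < c * ⟪p.1 • p.2, β⟫)
    (hlt : c * ⟪weightedSum (u ++ (c, β) :: v), β⟫ < c ^ 2 * ⟪β, β⟫) :
    ∃ L, WeightedEquiv Ψ (u ++ (c, β) :: v) L ∧ totalWeight L ≠ 0 ∧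
      totalWeight L < totalWeight (u ++ (c, β) :: v) := by
  obtain ⟨hu, hβv⟩ := List.forall_mem_append.1 hL
  obtain ⟨hβ, hv⟩ := List.forall_mem_cons.1 hβv
  obtain ⟨dom_u, dom_v⟩ := List.forall_mem_append.1 dominated
  have hsplit : c * ⟪weightedSum u, β⟫ + c * ⟪weightedSum v, β⟫ < 0 := by
    rw [weightedSum_append, weightedSum_cons, inner_add_left, inner_add_left,
      ← Int.cast_smul_eq_zsmul ℝ, real_inner_smul_left] at hlt
    linear_combination hlt
  by_cases hneg : c * ⟪weightedSum v, β⟫ < 0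
  · obtain ⟨L, hL, ne_zero, lt⟩ := hΨ.exists_weightedEquiv_lt_right hβ hv dom_v hneg
    refine ⟨u ++ L, by simpa using hL.append_append u [], ?_, ?_⟩
    all_goals simp only [totalWeight_append, totalWeight_cons] at lt ⊢; omega
  · obtain ⟨L, hL, ne_zero, lt⟩ :=
      hΨ.exists_weightedEquiv_lt_left hβ hu dom_u (by linarith)
    refine ⟨L ++ v, by simpa using hL.append_append [] v, ?_, ?_⟩
    all_goals simp only [totalWeight_append, totalWeight_cons, totalWeight_nil] at lt ⊢; omega

/-- A weighted vector `c • β` of maximal length that violates both alternatives can be moved past a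
block so that `|c|` drops. -/
theorem exists_weightedEquiv_terminal (hΨ : IsCrystRootSet Ψ) {L : List (ℤ × V)}
    (hL : ∀ p ∈ L, p.2 ∈ Ψ) (ne_zero : totalWeight L ≠ 0) :
    ∃ (u : List (ℤ × V)) (c : ℤ) (β : V) (v : List (ℤ × V)),
      WeightedEquiv Ψ L (u ++ (c, β) :: v) ∧ c ≠ 0 ∧
      (sAff β 0 ∈ reflections ((u ++ v).map Prod.snd) ∨
        c ^ 2 * ⟪β, β⟫ ≤ c * ⟪weightedSum L, β⟫) := by
  induction h : totalWeight L using Nat.strong_induction_on generalizing L with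
  | _ N ih =>
  subst h
  obtain ⟨q, hqL, hq⟩ := exists_weight_ne_zero ne_zero
  obtain ⟨⟨c, β⟩, hβL, maximal⟩ := Set.exists_max_image {p | p ∈ L}
    (fun p => (p.1 : ℝ) ^ 2 * ⟪p.2, p.2⟫) L.finite_toSet ⟨q, hqL⟩
  have hβ : β ≠ 0 := hΨ.ne_zero β (hL _ hβL)
  have hc : c ≠ 0 := by
    rintro rfl
    have q_pos : 0 < (q.1 : ℝ) ^ 2 * ⟪q.2, q.2⟫ :=
      mul_pos (by positivity) (real_inner_self_pos.2 (hΨ.ne_zero _ (hL q hqL)))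
    exact q_pos.not_ge (by simpa using maximal q hqL)
  obtain ⟨u, v, rfl⟩ := List.append_of_mem hβL
  by_contra! not_terminal
  have initial := not_terminal u c β v (.refl _) hc
  have dominated : ∀ p ∈ u ++ v, -(c ^ 2 * ⟪β, β⟫) < c * ⟪p.1 • p.2, β⟫ := by
    intro p hp
    have hpL : p ∈ u ++ (c, β) :: v := by
      simp only [List.mem_append, List.mem_cons] at hp ⊢
      tauto
    refine neg_lt_mul_inner_smul (hΨ.ne_zero _ (hL p hpL)) hβ hc (maximal p hpL) fun heq => ?_
    exact initial.1 (heq ▸ List.mem_map.2 ⟨p.2, List.mem_map_of_mem hp, rfl⟩)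
  obtain ⟨L', hL', ne_zero', lt⟩ := hΨ.exists_weightedEquiv_lt hL dominated initial.2
  obtain ⟨u', c', β', v', h', hc', terminal⟩ := ih _ lt (hL'.mem hL) ne_zero' rfl
  have continued := not_terminal u' c' β' v' (hL'.trans h') hc'
  rw [hL'.weightedSum_eq] at continued
  exact terminal.elim continued.1 continued.2.not_ge

end IsCrystRootSet

end Descent

section LinearIndependence

theorem mulVec_eq_zero_iff_sum_smul_eq_zero {ι : Type*} [Fintype ι] {b : ι → V}
    (hb : ∀ i, b i ≠ 0) {A : Matrix ι ι ℝ} (hA : ∀ i j, A i j * ⟪b i, b i⟫ = 2 * ⟪b j, b i⟫)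
    (c : ι → ℝ) : A.mulVec c = 0 ↔ ∑ j, c j • b j = 0 := by
  have coord (i : ι) : A.mulVec c i * ⟪b i, b i⟫ = 2 * ⟪∑ j, c j • b j, b i⟫ := by
    rw [sum_inner, Finset.mul_sum, Matrix.mulVec, dotProduct, Finset.sum_mul]
    refine Finset.sum_congr rfl fun j _ => ?_
    rw [real_inner_smul_left]
    linear_combination c j * hA i j
  constructor <;> intro h
  · have orthogonal (i : ι) : ⟪∑ j, c j • b j, b i⟫ = 0 := by
      have := coord i
      rw [h, Pi.zero_apply, zero_mul] at this
      linarith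
    rw [← inner_self_eq_zero (𝕜 := ℝ), inner_sum]
    simp only [real_inner_smul_right, orthogonal, mul_zero, Finset.sum_const_zero]
  · funext i
    have := coord i
    rw [h, inner_zero_left, mul_zero] at this
    exact (mul_eq_zero.1 this).resolve_right (inner_self_ne_zero.2 (hb i))

/-- Linear dependence is detected by the vanishing of the determinant of the Cartan matrix, which
is integral. -/
theorem linearIndependent_real_of_int {ι : Type*} [Finite ι] {b : ι → V} (hb : ∀ i, b i ≠ 0)
    (cartan_int : ∀ i j, ∃ n : ℤ, n * ⟪b i, b i⟫ = 2 * ⟪b j, b i⟫)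
    (h : LinearIndependent ℤ b) : LinearIndependent ℝ b := by
  classical
  cases nonempty_fintype ι
  choose A hA using cartan_int
  let AR : Matrix ι ι ℝ := (Int.castRingHom ℝ).mapMatrix (Matrix.of A)
  have relation_iff (c : ι → ℝ) : AR.mulVec c = 0 ↔ ∑ j, c j • b j = 0 :=
    mulVec_eq_zero_iff_sum_smul_eq_zero hb hA c
  contrapose! h
  obtain ⟨c, hc, hne⟩ := Fintype.not_linearIndependent_iff.1 h
  have det_eq_zero : AR.det = 0 :=
    Matrix.exists_mulVec_eq_zero_iff.1 ⟨c, Function.ne_iff.2 hne, (relation_iff c).2 hc⟩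
  rw [← RingHom.map_det, eq_intCast, Int.cast_eq_zero] at det_eq_zero
  obtain ⟨a, ha, hAa⟩ := Matrix.exists_mulVec_eq_zero_iff.2 det_eq_zero
  have real_relation : AR.mulVec (fun i => (a i : ℝ)) = 0 := by
    funext i
    have := RingHom.map_mulVec (Int.castRingHom ℝ) (Matrix.of A) a i
    simpa [AR, Function.comp_def, hAa] using this.symm
  have int_relation : ∑ j, a j • b j = 0 := by
    simpa only [Int.cast_smul_eq_zsmul] using (relation_iff _).1 real_relation
  exact Fintype.not_linearIndependent_iff.2 ⟨a, int_relation, Function.ne_iff.1 ha⟩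

/-- The real span of the entries of a list. -/
abbrev listSpan (l : List V) : Submodule ℝ V := Submodule.span ℝ {x | x ∈ l}

instance (l : List V) : FiniteDimensional ℝ (listSpan l) :=
  FiniteDimensional.span_of_finite ℝ l.finite_toSet

theorem linearIndependent_get_iff_finrank {l : List V} :
    LinearIndependent ℝ l.get ↔ Module.finrank ℝ (listSpan l) = l.length := by
  rw [linearIndependent_iff_card_eq_finrank_span, Set.range_list_get, Fintype.card_fin, eq_comm]
  rfl

theorem linearIndependent_get_of_listSpan_eq {l l' : List V} (hl : LinearIndependent ℝ l.get)
    (hspan : listSpan l = listSpan l') (hlen : l.length = l'.length) :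
    LinearIndependent ℝ l'.get := by
  rw [linearIndependent_get_iff_finrank, ← hspan, ← hlen]
  exact linearIndependent_get_iff_finrank.1 hl

theorem linearIndependent_get_cons {x : V} {l : List V} :
    LinearIndependent ℝ (x :: l).get ↔ LinearIndependent ℝ l.get ∧ x ∉ listSpan l := by
  have : (x :: l).get = Fin.cons x l.get := by
    funext i
    exact Fin.cases rfl (fun _ => rfl) i
  rw [this, linearIndependent_finCons, Set.range_list_get]

theorem linearIndependent_get_middle {x : V} {u v : List V} :
    LinearIndependent ℝ (u ++ x :: v).get ↔
      LinearIndependent ℝ (u ++ v).get ∧ x ∉ listSpan (u ++ v) := by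
  rw [← linearIndependent_get_cons, linearIndependent_get_iff_finrank,
    linearIndependent_get_iff_finrank]
  have : {y | y ∈ u ++ x :: v} = {y | y ∈ x :: (u ++ v)} := by
    ext; simp [or_left_comm]
  rw [listSpan, this]
  simp [add_assoc]

theorem mem_orthogonal_listSpan_iff {l : List V} {v : V} :
    v ∈ (listSpan l)ᗮ ↔ ∀ x ∈ l, sAff x 0 v = v := by
  rw [← Submodule.span_singleton_le_iff_mem, Submodule.le_orthogonal_iff_le_orthogonal,
    Submodule.span_le]
  simp only [sAff_zero_eq_self_iff, ← Submodule.mem_orthogonal_singleton_iff_inner_right]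
  rfl

theorem sub_mem_listSpan_of_mem_reflectionGroup {l : List V} {g : Equiv.Perm V}
    (hg : g ∈ reflectionGroup l) (v : V) : g v - v ∈ listSpan l := by
  induction hg using Subgroup.closure_induction generalizing v with
  | mem g hg =>
    obtain ⟨x, hx, rfl⟩ := List.mem_map.1 hg
    rw [sAff_zero_apply, sub_sub_cancel_left]
    exact neg_mem (Submodule.smul_mem _ _ (Submodule.subset_span hx))
  | one => simp
  | mul g h _ _ ihg ihh => simpa using add_mem (ihg (h v)) (ihh v)
  | inv g _ ih => simpa using neg_mem (ih (g⁻¹ v))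

theorem mem_listSpan_of_sAff_mem_reflectionGroup {l : List V} {x : V}
    (hx : sAff x 0 ∈ reflectionGroup l) : x ∈ listSpan l := by
  have h := sub_mem_listSpan_of_mem_reflectionGroup hx x
  rw [sAff_zero_eq_reflection, Submodule.reflection_orthogonalComplement_singleton_eq_neg,
    ← neg_add', neg_mem_iff, ← two_smul ℝ] at h
  exact (Submodule.smul_mem_iff _ two_ne_zero).1 h

theorem listSpan_mono_of_reflectionGroup_le {l l' : List V}
    (h : reflectionGroup l ≤ reflectionGroup l') : listSpan l ≤ listSpan l' :=
  Submodule.span_le.2 fun _ hx =>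
    mem_listSpan_of_sAff_mem_reflectionGroup (h (sAff_mem_reflectionGroup hx))

theorem listSpan_eq_of_hurwitzEquiv {l l' : List V}
    (h : HurwitzEquiv (reflections l) (reflections l')) : listSpan l = listSpan l' :=
  le_antisymm (listSpan_mono_of_reflectionGroup_le h.reflectionGroup_eq.le)
    (listSpan_mono_of_reflectionGroup_le h.reflectionGroup_eq.ge)

theorem linearIndependent_get_of_hurwitzEquiv {l l' : List V} (hl : LinearIndependent ℝ l.get)
    (h : HurwitzEquiv (reflections l) (reflections l')) : LinearIndependent ℝ l'.get :=
  linearIndependent_get_of_listSpan_eq hl (listSpan_eq_of_hurwitzEquiv h)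
    (by simpa using h.length_eq)

theorem prod_mem_reflectionGroup (l : List V) : (reflections l).prod ∈ reflectionGroup l :=
  list_prod_mem fun _ hg => Subgroup.subset_closure hg

/-- Carter's lemma. -/
theorem prod_reflections_apply_eq_iff {l : List V}
    (hl : LinearIndependent ℝ l.get) {v : V} :
    (reflections l).prod v = v ↔ v ∈ (listSpan l)ᗮ := by
  induction l with
  | nil => simp [mem_orthogonal_listSpan_iff]
  | cons x l ih =>
    obtain ⟨hl, hx⟩ := linearIndependent_get_cons.1 hl
    rw [mem_orthogonal_listSpan_iff, List.forall_mem_cons, ← mem_orthogonal_listSpan_iff, ← ih hl,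
      reflections_cons, List.prod_cons, Equiv.Perm.mul_apply]
    constructor
    · intro hfix
      have eq_reflect : (reflections l).prod v = sAff x 0 v := by
        rw [← hfix, sAff_sAff_zero, hfix]
      have hfix_l : (reflections l).prod v = v := by
        have mem := sub_mem_listSpan_of_mem_reflectionGroup (prod_mem_reflectionGroup l) v
        rw [eq_reflect, sAff_zero_apply, sub_sub_cancel_left, neg_mem_iff] at mem
        rw [eq_reflect, sAff_zero_apply, sub_eq_self]
        by_contra hne
        exact hx ((Submodule.smul_mem_iff _ (left_ne_zero_of_smul hne)).1 mem)
      exact ⟨eq_reflect ▸ hfix_l, hfix_l⟩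
    · rintro ⟨hfix_x, hfix_l⟩
      rw [hfix_l, hfix_x]

theorem listSpan_eq_of_prod_eq {l l' : List V} (hl : LinearIndependent ℝ l.get)
    (hl' : LinearIndependent ℝ l'.get) (h : (reflections l).prod = (reflections l').prod) :
    listSpan l = listSpan l' := by
  rw [← Submodule.orthogonal_orthogonal (listSpan l),
    ← Submodule.orthogonal_orthogonal (listSpan l')]
  congr 1
  ext v
  rw [← prod_reflections_apply_eq_iff hl, h, prod_reflections_apply_eq_iff hl']

end LinearIndependence

section IntegralSubsystem

/-- A linearly dependent tuple of roots carries an integer relation; its weighted sum vanishes, so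
the descent can only stop at a repeated reflection. -/
theorem IsCrystRootSet.exists_hurwitzEquiv_pair {Ψ : Set V} (hΨ : IsCrystRootSet Ψ) {l : List V}
    (hl : ∀ x ∈ l, x ∈ Ψ) (hdep : ¬LinearIndependent ℝ l.get) :
    ∃ (x : V) (m : List V), x ∈ Ψ ∧ (∀ y ∈ m, y ∈ Ψ) ∧
      HurwitzEquiv (reflections l) (reflections (x :: x :: m)) := by
  have get_mem (i) : l.get i ∈ Ψ := hl _ (List.get_mem l i)
  have int_dep : ¬LinearIndependent ℤ l.get := fun h => hdep <|
    linearIndependent_real_of_int (fun i => hΨ.ne_zero _ (get_mem i))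
      (fun i j => hΨ.cartan_int _ (get_mem i) _ (get_mem j)) h
  obtain ⟨c, hc, i, hci⟩ := Fintype.not_linearIndependent_iff.1 int_dep
  obtain ⟨L, rfl, hsum, entry_mem⟩ := exists_weightedSum_eq_sum l c
  rw [hc] at hsum
  have ne_zero : totalWeight L ≠ 0 := fun h => hci (totalWeight_eq_zero_iff.1 h _ (entry_mem i))
  have hL : ∀ p ∈ L, p.2 ∈ Ψ := List.forall_mem_map.1 hl
  obtain ⟨u, d, β, v, hequiv, hd, terminal⟩ := hΨ.exists_weightedEquiv_terminal hL ne_zero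
  have hroots := hequiv.mem hL
  have hβ : β ∈ Ψ := hroots (d, β) (by simp)
  have long : ¬(d ^ 2 * ⟪β, β⟫ ≤ d * ⟪weightedSum L, β⟫) := by
    have : 0 < ⟪β, β⟫ := real_inner_self_pos.2 (hΨ.ne_zero β hβ)
    rw [hsum, inner_zero_left, mul_zero, not_le]
    positivity
  have repeated := terminal.resolve_right long
  have hurwitz := hequiv.hurwitz
  simp only [List.map_append, List.map_cons] at hurwitz repeated
  obtain ⟨m, hm, hpair⟩ := hΨ.exists_hurwitzEquiv_cons_cons
    (by simpa only [List.map_append, List.map_cons] using List.forall_mem_map.2 hroots) repeated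
  exact ⟨β, m, hβ, hm, hurwitz.trans hpair⟩

theorem exists_linearIndependent_reflections_prod_eq {Ψ : Set V} (hΨ : IsCrystRootSet Ψ)
    {g : Equiv.Perm V} (hg : g ∈ Subgroup.closure (FinReflections Ψ)) :
    ∃ l : List V, (∀ x ∈ l, x ∈ Ψ) ∧ LinearIndependent ℝ l.get ∧ (reflections l).prod = g := by
  have factorization : ∃ l : List V, (∀ x ∈ l, x ∈ Ψ) ∧ (reflections l).prod = g := by
    rw [← Subgroup.mem_toSubmonoid, Subgroup.closure_toSubmonoid] at hg
    obtain ⟨t, ht, rfl⟩ := Submonoid.exists_list_of_mem_closure hg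
    have mem_of_inv (s : Equiv.Perm V) (hs : s⁻¹ ∈ FinReflections Ψ) : s ∈ FinReflections Ψ := by
      obtain ⟨α, hα, h⟩ := hs
      exact ⟨α, hα, by rw [← inv_sAff, ← h, inv_inv]⟩
    obtain ⟨l, hl, rfl⟩ := exists_reflections_eq fun s hs => (ht s hs).elim id (mem_of_inv s)
    exact ⟨l, hl, rfl⟩
  obtain ⟨l, ⟨hl, hprod⟩, shortest⟩ :=
    exists_minimalFor_of_wellFoundedLT _ List.length factorization
  refine ⟨l, hl, ?_, hprod⟩
  by_contra hdep
  obtain ⟨x, m, -, hm, h⟩ := hΨ.exists_hurwitzEquiv_pair hl hdep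
  have hmprod : (reflections m).prod = g := by
    rw [← hprod, h.prod_eq, reflections_cons, reflections_cons, List.prod_cons, List.prod_cons,
      ← mul_assoc, sAff_mul_self, one_mul]
  have hlen := h.length_eq
  have := shortest ⟨hm, hmprod⟩
  simp only [length_reflections, List.length_cons] at hlen this
  omega

theorem exists_eq_smul_of_sAff_mem_closure {Ψ : Set V} (hΨ : IsCrystRootSet Ψ) {α : V} (hα : α ≠ 0)
    (h : sAff α 0 ∈ Subgroup.closure (FinReflections Ψ)) : ∃ γ ∈ Ψ, ∃ c : ℝ, γ = c • α := by
  obtain ⟨l, hl, hli, hprod⟩ := exists_linearIndependent_reflections_prod_eq hΨ h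
  have singleton : LinearIndependent ℝ [α].get := by
    rw [linearIndependent_get_cons]
    exact ⟨linearIndependent_get_iff_finrank.2 (by simp [listSpan]), by simpa [listSpan] using hα⟩
  have hspan := listSpan_eq_of_prod_eq hli singleton (by simpa using hprod)
  simp only [listSpan, List.mem_singleton, Set.ofPred_eq_eq_singleton] at hspan
  cases l with
  | nil => exact absurd (Submodule.span_singleton_eq_bot (R := ℝ).1 (by simpa using hspan.symm)) hα
  | cons γ l =>
    have hγ : γ ∈ ℝ ∙ α := hspan ▸ Submodule.subset_span List.mem_cons_self
    obtain ⟨c, rfl⟩ := Submodule.mem_span_singleton.1 hγ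
    exact ⟨_, hl _ (by simp), c, rfl⟩

/-- The roots which, together with their coroots, are integer combinations of the entries of a
list and of their coroots. -/
def integralSubsystem (Φ : Set V) (l : List V) : Set V :=
  {γ ∈ Φ | γ ∈ Submodule.span ℤ {x | x ∈ l} ∧ coroot γ ∈ Submodule.span ℤ (coroot '' {x | x ∈ l})}

theorem mem_integralSubsystem_of_mem {Φ : Set V} {l : List V} {x : V} (hxΦ : x ∈ Φ) (hx : x ∈ l) :
    x ∈ integralSubsystem Φ l :=
  ⟨hxΦ, Submodule.subset_span hx, Submodule.subset_span (Set.mem_image_of_mem coroot hx)⟩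

theorem IsCrystRootSet.integralSubsystem {Φ : Set V} (hΦ : IsCrystRootSet Φ) (l : List V) :
    IsCrystRootSet (integralSubsystem Φ l) where
  ne_zero α hα := hΦ.ne_zero α hα.1
  cartan_int α hα β hβ := hΦ.cartan_int α hα.1 β hβ.1
  sAff_mem α hα β hβ := by
    have hα0 := hΦ.ne_zero α hα.1
    obtain ⟨n, hn⟩ := hΦ.cartan_int α hα.1 β hβ.1
    obtain ⟨m, hm⟩ := hΦ.cartan_int β hβ.1 α hα.1
    have reflect_coroot : sAff α 0 (coroot β) = coroot β - m • coroot α := by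
      have hββ : ⟪β, β⟫ ≠ 0 := inner_self_ne_zero.2 (hΦ.ne_zero β hβ.1)
      have pairing : ⟪coroot β, α⟫ = m := by
        rw [coroot, real_inner_smul_left, real_inner_comm α β, div_mul_eq_mul_div, ← hm,
          mul_div_cancel_right₀ _ hββ]
      change coroot β - (⟪coroot β, α⟫ - 0) • coroot α = _
      rw [sub_zero, pairing, Int.cast_smul_eq_zsmul]
    refine ⟨hΦ.sAff_mem α hα.1 β hβ.1, ?_, ?_⟩
    · rw [sAff_zero_apply_of_mul_inner_self_eq hα0 hn]
      exact sub_mem hβ.2.1 (Submodule.smul_mem _ _ hα.2.1)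
    · rw [coroot_sAff_zero, reflect_coroot]
      exact sub_mem hβ.2.2 (Submodule.smul_mem _ _ hα.2.2)

theorem IsCrystRootSystem.mem_integralSubsystem {Φ : Set V} (hΦ : IsCrystRootSystem Φ) {l : List V}
    (hl : ∀ x ∈ l, x ∈ Φ) {α : V} (hα : α ∈ Φ) (h : sAff α 0 ∈ reflectionGroup l) :
    α ∈ integralSubsystem Φ l := by
  have le : reflectionGroup l ≤ Subgroup.closure (FinReflections (integralSubsystem Φ l)) :=
    reflectionGroup_le_iff.2 fun x hx =>
      Subgroup.subset_closure ⟨x, mem_integralSubsystem_of_mem (hl x hx) hx, rfl⟩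
  have hint := hΦ.isCrystRootSet.integralSubsystem l
  obtain ⟨γ, hγ, c, rfl⟩ := exists_eq_smul_of_sAff_mem_closure hint (hΦ.ne_zero α hα) (le h)
  rcases hΦ.reduced α hα c hγ.1 with rfl | rfl
  · rwa [one_smul] at hγ
  · simpa using hint.neg_mem hγ

theorem IsCrystRootSystem.integralSubsystem_subset {Φ : Set V} (hΦ : IsCrystRootSystem Φ)
    {l l' : List V} (hl : ∀ x ∈ l, x ∈ Φ) (hl' : ∀ x ∈ l', x ∈ Φ)
    (h : reflectionGroup l ≤ reflectionGroup l') :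
    integralSubsystem Φ l ⊆ integralSubsystem Φ l' := by
  have entries : ∀ x ∈ l, x ∈ integralSubsystem Φ l' := fun x hx =>
    hΦ.mem_integralSubsystem hl' (hl x hx) (h (sAff_mem_reflectionGroup hx))
  rintro γ ⟨hγ, hspan, hcospan⟩
  refine ⟨hγ, Submodule.span_le.2 (fun x hx => (entries x hx).2.1) hspan, ?_⟩
  exact Submodule.span_le.2 (Set.image_subset_iff.2 fun x hx => (entries x hx).2.2) hcospan

end IntegralSubsystem

section IntegralCoefficients

theorem eq_of_sub_smul_mem {S : Submodule ℝ V} {x y : V} (hx : x ∉ S) {c d : ℝ}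
    (hc : y - c • x ∈ S) (hd : y - d • x ∈ S) : c = d := by
  have : (d - c) • x ∈ S := by simpa [sub_smul] using sub_mem hc hd
  by_contra hne
  exact hx ((Submodule.smul_mem_iff _ (sub_ne_zero.2 (Ne.symm hne))).1 this)

theorem mem_of_mem_span_int {S : Submodule ℝ V} {s : Set V} (hs : s ⊆ S) {y : V}
    (hy : y ∈ Submodule.span ℤ s) : y ∈ S :=
  Submodule.span_le (p := S.restrictScalars ℤ) |>.2 hs hy

theorem exists_int_sub_smul_mem {S : Submodule ℝ V} {s : Set V} (hs : s ⊆ S) {x y : V}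
    (hy : y ∈ Submodule.span ℤ (insert x s)) : ∃ k : ℤ, y - (k : ℝ) • x ∈ S := by
  obtain ⟨k, z, hz, rfl⟩ := Submodule.mem_span_insert.1 hy
  exact ⟨k, by simpa [Int.cast_smul_eq_zsmul] using mem_of_mem_span_int hs hz⟩

theorem mem_span_int_of_mem_span_insert {S : Submodule ℝ V} {s : Set V} (hs : s ⊆ S) {x y : V}
    (hx : x ∉ S) (hyS : y ∈ S) (hy : y ∈ Submodule.span ℤ (insert x s)) :
    y ∈ Submodule.span ℤ s := by
  obtain ⟨k, z, hz, rfl⟩ := Submodule.mem_span_insert.1 hy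
  have hkx : (k : ℝ) • x ∈ S := by
    rw [Int.cast_smul_eq_zsmul]
    exact (add_mem_cancel_right (mem_of_mem_span_int hs hz)).1 hyS
  have hk : k = 0 := by
    by_contra hne
    exact hx ((Submodule.smul_mem_iff _ (Int.cast_ne_zero.2 hne)).1 hkx)
  rwa [hk, zero_smul, zero_add]

theorem coroot_mem_iff {S : Submodule ℝ V} {α : V} (hα : α ≠ 0) : coroot α ∈ S ↔ α ∈ S :=
  Submodule.smul_mem_iff _ (div_ne_zero two_ne_zero (inner_self_ne_zero.2 hα))

theorem coroot_image_subset_listSpan (l : List V) : coroot '' {y | y ∈ l} ⊆ listSpan l :=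
  Set.image_subset_iff.2 fun _ hy => Submodule.smul_mem _ _ (Submodule.subset_span hy)

theorem mem_integralSubsystem_cons {Φ : Set V} {α x : V} {l : List V} :
    α ∈ integralSubsystem Φ (x :: l) ↔ α ∈ Φ ∧ α ∈ Submodule.span ℤ (insert x {y | y ∈ l}) ∧
      coroot α ∈ Submodule.span ℤ (insert (coroot x) (coroot '' {y | y ∈ l})) := by
  have mem_insert : {y | y ∈ x :: l} = insert x {y | y ∈ l} := Set.ext fun _ => List.mem_cons
  rw [integralSubsystem, mem_insert, Set.image_insert_eq]
  rfl

theorem mem_integralSubsystem_of_mem_listSpan {Φ : Set V} {α x : V} {l : List V} (hα0 : α ≠ 0)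
    (hα : α ∈ integralSubsystem Φ (x :: l)) (hx : x ∉ listSpan l) (hαl : α ∈ listSpan l) :
    α ∈ integralSubsystem Φ l := by
  have hx0 : x ≠ 0 := fun h => hx (h ▸ zero_mem _)
  obtain ⟨hαΦ, hroot, hcoroot⟩ := mem_integralSubsystem_cons.1 hα
  exact ⟨hαΦ, mem_span_int_of_mem_span_insert Submodule.subset_span hx hαl hroot,
    mem_span_int_of_mem_span_insert (coroot_image_subset_listSpan l)
      ((coroot_mem_iff hx0).not.2 hx) ((coroot_mem_iff hα0).2 hαl) hcoroot⟩

/-- The identity `c ⟪x, x⟫ = k ⟪α, α⟫` compares the coefficient `c` of `x` in `α` with the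
coefficient `k` of `coroot x` in `coroot α`. -/
theorem exists_int_sub_smul_mem_listSpan {Φ : Set V} {α x : V} {l : List V} (hα0 : α ≠ 0)
    (hα : α ∈ integralSubsystem Φ (x :: l)) (hx : x ∉ listSpan l) :
    ∃ c k : ℤ, α - (c : ℝ) • x ∈ listSpan l ∧ c * ⟪x, x⟫ = k * ⟪α, α⟫ := by
  have hx0 : x ≠ 0 := fun h => hx (h ▸ zero_mem _)
  have hxx : ⟪x, x⟫ ≠ 0 := inner_self_ne_zero.2 hx0
  have hαα : ⟪α, α⟫ ≠ 0 := inner_self_ne_zero.2 hα0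
  obtain ⟨-, hroot, hcoroot⟩ := mem_integralSubsystem_cons.1 hα
  obtain ⟨c, hc⟩ := exists_int_sub_smul_mem Submodule.subset_span hroot
  obtain ⟨k, hk⟩ := exists_int_sub_smul_mem (coroot_image_subset_listSpan l) hcoroot
  have hk' : α - (k * (⟪α, α⟫ / ⟪x, x⟫)) • x ∈ listSpan l := by
    have := Submodule.smul_mem _ (⟪α, α⟫ / 2) hk
    rwa [coroot, coroot, smul_sub, smul_smul, smul_smul, smul_smul,
      show ⟪α, α⟫ / 2 * (2 / ⟪α, α⟫) = 1 by field_simp, one_smul,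
      show ⟪α, α⟫ / 2 * k * (2 / ⟪x, x⟫) = k * (⟪α, α⟫ / ⟪x, x⟫) by field_simp] at this
  refine ⟨c, k, hc, ?_⟩
  rw [eq_of_sub_smul_mem hx hc hk']
  field_simp

theorem norm_mul_norm_le_abs_inner {α β : V} {c k : ℤ} (hc : c ≠ 0) (hβ : β ≠ 0)
    (hck : c * ⟪β, β⟫ = k * ⟪α, α⟫) (h : c ^ 2 * ⟪β, β⟫ ≤ c * ⟪α, β⟫) :
    ‖α‖ * ‖β‖ ≤ |⟪α, β⟫| := by
  have hββ : 0 < ⟪β, β⟫ := real_inner_self_pos.2 hβ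
  have hc2 : (0 : ℝ) < c ^ 2 := by positivity
  have eq_mul : c ^ 2 * ⟪β, β⟫ = (c * k : ℤ) * ⟪α, α⟫ := by
    push_cast
    linear_combination c * hck
  have pos : 0 < (c * k : ℤ) * ⟪α, α⟫ := eq_mul ▸ mul_pos hc2 hββ
  have one_le : (1 : ℝ) ≤ (c * k : ℤ) := by
    have : (0 : ℝ) < (c * k : ℤ) := pos_of_mul_pos_left pos real_inner_self_nonneg
    exact_mod_cast this
  have sq_le : c ^ 2 * (⟪α, α⟫ * ⟪β, β⟫) ≤ c ^ 2 * ⟪α, β⟫ ^ 2 := calc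
    c ^ 2 * (⟪α, α⟫ * ⟪β, β⟫) = 1 * ⟪α, α⟫ * (c ^ 2 * ⟪β, β⟫) := by ring
    _ ≤ (c * k : ℤ) * ⟪α, α⟫ * (c ^ 2 * ⟪β, β⟫) := by
      gcongr
      exact real_inner_self_nonneg
    _ = (c ^ 2 * ⟪β, β⟫) * (c ^ 2 * ⟪β, β⟫) := by rw [← eq_mul]
    _ ≤ (c * ⟪α, β⟫) * (c * ⟪α, β⟫) := by
      have : 0 ≤ c ^ 2 * ⟪β, β⟫ := by positivity
      exact mul_self_le_mul_self this h
    _ = c ^ 2 * ⟪α, β⟫ ^ 2 := by ring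
  refine abs_le_of_sq_le_sq' ?_ (abs_nonneg _) |>.2
  rw [mul_pow, ← real_inner_self_eq_norm_sq, ← real_inner_self_eq_norm_sq, sq_abs]
  exact le_of_mul_le_mul_left sq_le hc2

end IntegralCoefficients

section Reduced

theorem IsCrystRootSet.exists_weightedEquiv_terminal_of_linearIndependent {Ψ : Set V}
    (hΨ : IsCrystRootSet Ψ) {L : List (ℤ × V)} (hL : ∀ p ∈ L, p.2 ∈ Ψ)
    (hli : LinearIndependent ℝ (L.map Prod.snd).get) (ne_zero : weightedSum L ≠ 0) :
    ∃ (u : List (ℤ × V)) (c : ℤ) (β : V) (v : List (ℤ × V)),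
      WeightedEquiv Ψ L (u ++ (c, β) :: v) ∧ c ≠ 0 ∧ β ∉ listSpan ((u ++ v).map Prod.snd) ∧
      c ^ 2 * ⟪β, β⟫ ≤ c * ⟪weightedSum L, β⟫ := by
  obtain ⟨u, c, β, v, hequiv, hc, terminal⟩ :=
    hΨ.exists_weightedEquiv_terminal hL (totalWeight_ne_zero ne_zero)
  have hli' := linearIndependent_get_of_hurwitzEquiv hli hequiv.hurwitz
  rw [List.map_append, List.map_cons, linearIndependent_get_middle, ← List.map_append] at hli'
  refine ⟨u, c, β, v, hequiv, hc, hli'.2, terminal.resolve_left fun repeated => hli'.2 ?_⟩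
  exact mem_listSpan_of_sAff_mem_reflectionGroup (Subgroup.subset_closure repeated)

variable {Φ : Set V}

/-- The descent stops at an entry `β` whose coefficients in `α` and whose coroot's coefficients in
`coroot α` are integral, which forces equality in the Cauchy-Schwarz inequality. -/
theorem IsCrystRootSystem.exists_hurwitzEquiv_cons_of_mem_integralSubsystem
    (hΦ : IsCrystRootSystem Φ) {l : List V} (hl : ∀ x ∈ l, x ∈ Φ)
    (hli : LinearIndependent ℝ l.get) {α : V} (hα : α ∈ integralSubsystem Φ l) :
    ∃ m : List V, (∀ x ∈ m, x ∈ Φ) ∧ HurwitzEquiv (reflections l) (reflections (α :: m)) := by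
  have hα0 := hΦ.ne_zero α hα.1
  obtain ⟨w, hw⟩ := Submodule.mem_span_range_iff_exists_fun ℤ |>.1 (Set.range_list_get l ▸ hα.2.1)
  obtain ⟨L, rfl, hsum, -⟩ := exists_weightedSum_eq_sum l w
  rw [hw] at hsum
  have hL := List.forall_mem_map.1 hl
  obtain ⟨u, c, β, v, hequiv, hc, hβuv, inner_le⟩ :=
    hΦ.isCrystRootSet.exists_weightedEquiv_terminal_of_linearIndependent hL hli
      (hsum.trans_ne hα0)
  have hroots := List.forall_mem_map.2 (hequiv.mem hL)
  have hβ0 : β ≠ 0 := hΦ.ne_zero β (hequiv.mem hL (c, β) (by simp))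
  have hα' : α ∈ integralSubsystem Φ (β :: (u ++ v).map Prod.snd) := by
    refine hΦ.integralSubsystem_subset hl (by grind) ?_ hα
    rw [hequiv.hurwitz.reflectionGroup_eq, reflectionGroup_le_iff]
    exact fun x hx => sAff_mem_reflectionGroup (by grind)
  obtain ⟨d, k, hd, hk⟩ := exists_int_sub_smul_mem_listSpan hα0 hα' hβuv
  have hcd : (c : ℝ) = d := by
    refine eq_of_sub_smul_mem hβuv ?_ hd
    have rest : α - (c : ℝ) • β = weightedSum (u ++ v) := by
      rw [← hsum, hequiv.weightedSum_eq, Int.cast_smul_eq_zsmul]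
      simp only [weightedSum_append, weightedSum_cons]
      abel
    rw [rest]
    exact mem_of_mem_span_int Submodule.subset_span
      (weightedSum_mem_span fun p hp => List.mem_map_of_mem hp)
  have parallel : sAff α 0 = sAff β 0 :=
    sAff_zero_eq_of_norm_mul_norm_le hα0 hβ0 <|
      norm_mul_norm_le_abs_inner hc hβ0 (hcd ▸ hk) (hsum ▸ inner_le)
  obtain ⟨m, hm, hpull⟩ := hΦ.isCrystRootSet.exists_hurwitzEquiv_cons (γ := α) hroots
    (by simp [parallel])
  exact ⟨m, hm, hequiv.hurwitz.trans hpull⟩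

/-- The reflections in the entries of a list generate the parabolic subgroup attached to its span,
i.e. the subgroup generated by the reflections in all roots of the span. -/
def GeneratesParabolic (Φ : Set V) (l : List V) : Prop :=
  ∀ γ ∈ Φ, γ ∈ listSpan l → sAff γ 0 ∈ reflectionGroup l

theorem GeneratesParabolic.of_hurwitzEquiv {l l' : List V} (h : GeneratesParabolic Φ l)
    (hequiv : HurwitzEquiv (reflections l) (reflections l')) : GeneratesParabolic Φ l' := by
  intro γ hγ hγl
  rw [← listSpan_eq_of_hurwitzEquiv hequiv] at hγl
  exact hequiv.reflectionGroup_eq ▸ h γ hγ hγl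

theorem GeneratesParabolic.of_cons (hΦ : IsCrystRootSystem Φ) {x : V} {l : List V}
    (hl : ∀ y ∈ x :: l, y ∈ Φ) (hli : LinearIndependent ℝ (x :: l).get)
    (h : GeneratesParabolic Φ (x :: l)) : GeneratesParabolic Φ l := by
  intro γ hγ hγl
  obtain ⟨hli, hx⟩ := linearIndependent_get_cons.1 hli
  have mono : listSpan l ≤ listSpan (x :: l) :=
    Submodule.span_mono fun _ => List.mem_cons_of_mem x
  have hγint : γ ∈ integralSubsystem Φ l :=
    mem_integralSubsystem_of_mem_listSpan (hΦ.ne_zero γ hγ)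
      (hΦ.mem_integralSubsystem hl hγ (h γ hγ (mono hγl))) hx hγl
  obtain ⟨m, -, hequiv⟩ := hΦ.exists_hurwitzEquiv_cons_of_mem_integralSubsystem
    (List.forall_mem_cons.1 hl).2 hli hγint
  exact hequiv.reflectionGroup_eq ▸ sAff_mem_reflectionGroup List.mem_cons_self

theorem IsCrystRootSystem.hurwitzEquiv_of_linearIndependent (hΦ : IsCrystRootSystem Φ)
    {l l' : List V} (hl : ∀ x ∈ l, x ∈ Φ) (hl' : ∀ x ∈ l', x ∈ Φ)
    (hli : LinearIndependent ℝ l.get) (hli' : LinearIndependent ℝ l'.get)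
    (hprod : (reflections l).prod = (reflections l').prod) (h : GeneratesParabolic Φ l) :
    HurwitzEquiv (reflections l) (reflections l') := by
  have hspan := listSpan_eq_of_prod_eq hli hli' hprod
  induction l' generalizing l with
  | nil =>
    have length_eq : l.length = 0 := by
      rw [← linearIndependent_get_iff_finrank.1 hli, hspan,
        linearIndependent_get_iff_finrank.1 hli', List.length_nil]
    rw [List.length_eq_zero_iff.1 length_eq]
    exact .refl _
  | cons β l' ih =>
    obtain ⟨hβ, hl'⟩ := List.forall_mem_cons.1 hl'
    have hβl : β ∈ listSpan l := hspan ▸ Submodule.subset_span List.mem_cons_self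
    obtain ⟨m, hm, hequiv⟩ := hΦ.exists_hurwitzEquiv_cons_of_mem_integralSubsystem hl hli
      (hΦ.mem_integralSubsystem hl hβ (h β hβ hβl))
    have hβm : LinearIndependent ℝ (β :: m).get :=
      linearIndependent_get_of_hurwitzEquiv hli hequiv
    have hm_li := (linearIndependent_get_cons.1 hβm).1
    have hl'_li := (linearIndependent_get_cons.1 hli').1
    have hm_prod : (reflections m).prod = (reflections l').prod := by
      rw [hequiv.prod_eq] at hprod
      simpa using hprod
    have hm_par : GeneratesParabolic Φ m :=
      .of_cons hΦ (List.forall_mem_cons.2 ⟨hβ, hm⟩) hβm (h.of_hurwitzEquiv hequiv)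
    exact hequiv.trans <| (ih hm hl' hm_li hl'_li hm_prod hm_par
      (listSpan_eq_of_prod_eq hm_li hl'_li hm_prod)).cons _

end Reduced

section DoubledReflection

/-- The sum of a finite set of vectors stable under the reflections is orthogonal to their span,
so its inner product with `y` is a positive multiple of its squared norm. -/
theorem exists_inner_pos_of_stable {l : List V} {O : Finset V} (hne : O.Nonempty)
    (stable : ∀ β ∈ l, ∀ z ∈ O, sAff β 0 z ∈ O) {y : V} (hy : y ∉ listSpan l)
    (hO : ∀ z ∈ O, y - z ∈ listSpan l) : ∃ z ∈ O, 0 < ⟪z, y⟫ := by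
  let S : V := ∑ z ∈ O, z
  have orthogonal : S ∈ (listSpan l)ᗮ := by
    refine mem_orthogonal_listSpan_iff.2 fun β hβ => ?_
    have map_sum_eq : sAff β 0 S = ∑ z ∈ O, sAff β 0 z := by
      simp only [S, sAff_zero_eq_reflection, map_sum]
    rw [map_sum_eq]
    exact Finset.sum_bij' (fun z _ => sAff β 0 z) (fun z _ => sAff β 0 z) (stable β hβ)
      (stable β hβ) (fun z _ => sAff_sAff_zero β z) (fun z _ => sAff_sAff_zero β z)
      (fun _ _ => rfl)
  have hdiff : (O.card : ℝ) • y - S ∈ listSpan l := by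
    have : (O.card : ℝ) • y - S = ∑ z ∈ O, (y - z) := by
      rw [Finset.sum_sub_distrib, Finset.sum_const, Nat.cast_smul_eq_nsmul]
    rw [this]
    exact Submodule.sum_mem _ hO
  have hcard : (0 : ℝ) < O.card := by exact_mod_cast hne.card_pos
  have hS : S ≠ 0 := by
    intro h
    rw [h, sub_zero, Submodule.smul_mem_iff _ hcard.ne'] at hdiff
    exact hy hdiff
  have inner_eq : O.card * ⟪S, y⟫ = ⟪S, S⟫ := by
    have := Submodule.inner_left_of_mem_orthogonal hdiff orthogonal
    rwa [inner_sub_right, real_inner_smul_right, sub_eq_zero] at this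
  have sum_pos : 0 < ∑ z ∈ O, ⟪z, y⟫ := by
    rw [← sum_inner]
    exact pos_of_mul_pos_right (inner_eq ▸ real_inner_self_pos.2 hS) hcard.le
  exact Finset.exists_lt_of_sum_lt (f := fun _ => (0 : ℝ)) (by simpa using sum_pos)

theorem IsCrystRootSet.sub_mem_of_inner_pos {Ψ : Set V} (hΨ : IsCrystRootSet Ψ) {y z : V}
    (hy : y ∈ Ψ) (hz : z ∈ Ψ) (hnorm : ‖y‖ = ‖z‖) (hne : y ≠ z) (hpos : 0 < ⟪y, z⟫) :
    y - z ∈ Ψ := by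
  have hz0 := hΨ.ne_zero z hz
  have hzz : 0 < ⟪z, z⟫ := real_inner_self_pos.2 hz0
  obtain ⟨n, hn⟩ := hΨ.cartan_int z hz y hy
  have inner_lt : ⟪y, z⟫ < ⟪z, z⟫ := by
    have : 0 < ⟪y - z, y - z⟫ := real_inner_self_pos.2 (sub_ne_zero.2 hne)
    rw [real_inner_sub_sub_self, real_inner_self_eq_norm_sq y, hnorm,
      ← real_inner_self_eq_norm_sq] at this
    linarith
  have n_pos : (0 : ℝ) < n := by
    refine pos_of_mul_pos_left (b := ⟪z, z⟫) ?_ hzz.le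
    linarith
  have n_lt : (n : ℝ) < 2 := by
    refine lt_of_mul_lt_mul_right (a := ⟪z, z⟫) ?_ hzz.le
    linarith
  have hn1 : n = 1 := by
    have h0 : 0 < n := by exact_mod_cast n_pos
    have h2 : n < 2 := by exact_mod_cast n_lt
    omega
  have := hΨ.sAff_mem z hz y hy
  rwa [sAff_zero_apply_of_mul_inner_self_eq hz0 hn, hn1, one_smul] at this

theorem hurwitzEquiv_pair_sAff {β : V} {m : List V} (hβ : sAff β 0 ∈ reflectionGroup m) (x : V) :
    HurwitzEquiv (reflections (x :: x :: m))
      (reflections (sAff β 0 x :: sAff β 0 x :: m)) := by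
  simp only [reflections_cons, sAff_sAff_zero_eq_conj]
  exact HurwitzEquiv.conj_pair (sAff_mul_self x 0) hβ

theorem hurwitzEquiv_pair_of_norm_eq {Φ : Set V} (hΦ : IsCrystRootSet Φ) (hfin : Φ.Finite)
    {m : List V} (hm : ∀ z ∈ m, z ∈ Φ) (hpar : GeneratesParabolic Φ m) {x y : V} (hx : x ∈ Φ)
    (hy : y ∈ Φ) (hym : y ∉ listSpan m) (hyx : y - x ∈ listSpan m) (hnorm : ‖x‖ = ‖y‖) :
    HurwitzEquiv (reflections (x :: x :: m)) (reflections (y :: y :: m)) := by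
  let reachable : Set V := {z ∈ Φ | ‖z‖ = ‖y‖ ∧ y - z ∈ listSpan m ∧
    HurwitzEquiv (reflections (x :: x :: m)) (reflections (z :: z :: m))}
  have reachable_finite : reachable.Finite := hfin.subset (Set.sep_subset _ _)
  have x_reachable : x ∈ reachable := ⟨hx, hnorm, hyx, .refl _⟩
  have stable : ∀ β ∈ m, ∀ z ∈ reachable, sAff β 0 z ∈ reachable := by
    rintro β hβ z ⟨hz, hznorm, hyz, hequiv⟩
    have hβm := sAff_mem_reflectionGroup hβ
    refine ⟨hΦ.sAff_mem β (hm β hβ) z hz, ?_, ?_, hequiv.trans (hurwitzEquiv_pair_sAff hβm z)⟩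
    · rw [← hznorm, sAff_zero_eq_reflection, LinearIsometryEquiv.norm_map]
    · simpa using sub_mem hyz (sub_mem_listSpan_of_mem_reflectionGroup hβm z)
  obtain ⟨z, hz, hpos⟩ := exists_inner_pos_of_stable (O := reachable_finite.toFinset)
    (by simpa using ⟨x, x_reachable⟩) (by simpa using stable) hym
    (fun z hz => (reachable_finite.mem_toFinset.1 hz).2.2.1)
  obtain ⟨hzΦ, hznorm, hyz, hequiv⟩ := reachable_finite.mem_toFinset.1 hz
  rcases eq_or_ne z y with rfl | hne
  · exact hequiv
  have hzy : z - y ∈ Φ := hΦ.sub_mem_of_inner_pos hzΦ hy hznorm hne hpos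
  have hzy_span : z - y ∈ listSpan m := neg_sub y z ▸ neg_mem hyz
  have := hurwitzEquiv_pair_sAff (hpar _ hzy hzy_span) z
  rw [sAff_sub_zero_apply hznorm] at this
  exact hequiv.trans this

/-- The coefficients of `x` in `y` and of `y` in `x` modulo the span of `m` are mutually inverse
integers, and so are those of the coroots; hence `x` and `y` have the same length. -/
theorem IsCrystRootSystem.hurwitzEquiv_pair {Φ : Set V} (hΦ : IsCrystRootSystem Φ) {m : List V}
    (hm : ∀ z ∈ m, z ∈ Φ) (hpar : GeneratesParabolic Φ m) {x y : V} (hxm : x ∉ listSpan m)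
    (hym : y ∉ listSpan m) (hx : x ∈ integralSubsystem Φ (y :: m))
    (hy : y ∈ integralSubsystem Φ (x :: m)) :
    HurwitzEquiv (reflections (x :: x :: m)) (reflections (y :: y :: m)) := by
  have hx0 := hΦ.ne_zero x hx.1
  have hy0 := hΦ.ne_zero y hy.1
  obtain ⟨c, k, hc, hck⟩ := exists_int_sub_smul_mem_listSpan hy0 hy hxm
  obtain ⟨d, j, hd, hdj⟩ := exists_int_sub_smul_mem_listSpan hx0 hx hym
  have hdc : (d : ℝ) * c = 1 := by
    refine eq_of_sub_smul_mem hxm (y := x) ?_ (by simp)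
    have := add_mem hd (Submodule.smul_mem _ (d : ℝ) hc)
    rwa [smul_sub, sub_add_sub_cancel, smul_smul] at this
  have hjk : (j : ℝ) * k = 1 := by
    have hxx : ⟪x, x⟫ ≠ 0 := inner_self_ne_zero.2 hx0
    have hyy : ⟪y, y⟫ ≠ 0 := inner_self_ne_zero.2 hy0
    refine mul_right_cancel₀ (mul_ne_zero hxx hyy) ?_
    linear_combination (-j * ⟪x, x⟫) * hck - c * ⟪x, x⟫ * hdj + ⟪x, x⟫ * ⟪y, y⟫ * hdc
  have hc_unit : c = 1 ∨ c = -1 :=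
    Int.isUnit_iff.1 (IsUnit.of_mul_eq_one_right d (by exact_mod_cast hdc))
  have hk_unit : k = 1 ∨ k = -1 :=
    Int.isUnit_iff.1 (IsUnit.of_mul_eq_one_right j (by exact_mod_cast hjk))
  have hnorm : ‖x‖ = ‖y‖ := by
    have abs_eq := congrArg abs hck
    have hc_abs : |(c : ℝ)| = 1 := by rcases hc_unit with rfl | rfl <;> simp
    have hk_abs : |(k : ℝ)| = 1 := by rcases hk_unit with rfl | rfl <;> simp
    rw [abs_mul, abs_mul, hc_abs, hk_abs] at abs_eq
    simpa using abs_eq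
  rcases hc_unit with rfl | rfl
  · exact hurwitzEquiv_pair_of_norm_eq hΦ.isCrystRootSet hΦ.finite hm hpar hx.1 hy.1 hym
      (by simpa using hc) hnorm
  · have := hurwitzEquiv_pair_of_norm_eq hΦ.isCrystRootSet hΦ.finite hm hpar
      (hΦ.isCrystRootSet.neg_mem hx.1) hy.1 hym (by simpa using hc) (by simpa using hnorm)
    simpa only [reflections_cons, sAff_neg_zero] using this

end DoubledReflection

section Generating

variable {Φ : Set V}

theorem sAff_mem_weylGroup {α : V} (hα : α ∈ Φ) : sAff α 0 ∈ WeylGroup Φ :=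
  Subgroup.subset_closure ⟨α, hα, rfl⟩

theorem reflectionGroup_cons_cons_self (x : V) (m : List V) :
    reflectionGroup (x :: x :: m) = reflectionGroup (x :: m) := by
  simp [reflectionGroup]

theorem IsCrystRootSystem.listSpan_eq_top (hΦ : IsCrystRootSystem Φ) {l : List V}
    (hgen : reflectionGroup l = WeylGroup Φ) : listSpan l = ⊤ := by
  rw [eq_top_iff, ← hΦ.spanning]
  exact Submodule.span_le.2 fun α hα =>
    mem_listSpan_of_sAff_mem_reflectionGroup (hgen ▸ sAff_mem_weylGroup hα)

theorem IsCrystRootSystem.exists_hurwitzEquiv_doubled (hΦ : IsCrystRootSystem Φ) {l : List V}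
    (hl : ∀ x ∈ l, x ∈ Φ) (hlen : l.length = Module.finrank ℝ V + 1)
    (hgen : reflectionGroup l = WeylGroup Φ) :
    ∃ (x : V) (m : List V), (∀ y ∈ x :: m, y ∈ Φ) ∧ LinearIndependent ℝ (x :: m).get ∧
      reflectionGroup (x :: m) = WeylGroup Φ ∧
      HurwitzEquiv (reflections l) (reflections (x :: x :: m)) := by
  have hdep : ¬LinearIndependent ℝ l.get := by
    rw [linearIndependent_get_iff_finrank, hΦ.listSpan_eq_top hgen, finrank_top, hlen]
    exact (Nat.lt_succ_self _).ne
  obtain ⟨x, m, hx, hm, hequiv⟩ := hΦ.isCrystRootSet.exists_hurwitzEquiv_pair hl hdep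
  have hgen' : reflectionGroup (x :: m) = WeylGroup Φ := by
    rw [← reflectionGroup_cons_cons_self, ← hequiv.reflectionGroup_eq, hgen]
  have hlen' : Module.finrank ℝ V = (x :: m).length := by
    simpa [hlen] using hequiv.length_eq
  refine ⟨x, m, List.forall_mem_cons.2 ⟨hx, hm⟩, ?_, hgen', hequiv⟩
  rw [linearIndependent_get_iff_finrank, hΦ.listSpan_eq_top hgen', finrank_top, hlen']

theorem IsCrystRootSystem.hurwitzEquiv_of_reflectionGroup_eq (hΦ : IsCrystRootSystem Φ)
    {l l' : List V} (hl : ∀ x ∈ l, x ∈ Φ) (hl' : ∀ x ∈ l', x ∈ Φ)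
    (hlen : l.length = Module.finrank ℝ V + 1) (hlen' : l'.length = Module.finrank ℝ V + 1)
    (hgen : reflectionGroup l = WeylGroup Φ) (hgen' : reflectionGroup l' = WeylGroup Φ)
    (hprod : (reflections l).prod = (reflections l').prod) :
    HurwitzEquiv (reflections l) (reflections l') := by
  obtain ⟨x, m, hxm, hli, hgen, hequiv⟩ := hΦ.exists_hurwitzEquiv_doubled hl hlen hgen
  obtain ⟨y, m', hym', hli', hgen', hequiv'⟩ := hΦ.exists_hurwitzEquiv_doubled hl' hlen' hgen'
  obtain ⟨hx, hm⟩ := List.forall_mem_cons.1 hxm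
  obtain ⟨hy, hm'⟩ := List.forall_mem_cons.1 hym'
  have hprod' : (reflections m).prod = (reflections m').prod := by
    rw [hequiv.prod_eq, hequiv'.prod_eq] at hprod
    simpa [← mul_assoc, sAff_mul_self] using hprod
  have hpar : GeneratesParabolic Φ m :=
    .of_cons hΦ hxm hli fun γ hγ _ => hgen ▸ sAff_mem_weylGroup hγ
  have tails : HurwitzEquiv (reflections m) (reflections m') :=
    hΦ.hurwitzEquiv_of_linearIndependent hm hm' (linearIndependent_get_cons.1 hli).1
      (linearIndependent_get_cons.1 hli').1 hprod' hpar
  have hgen_y : reflectionGroup (y :: m) = WeylGroup Φ :=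
    (tails.cons (sAff y 0)).closure_eq.trans hgen'
  have heads : HurwitzEquiv (reflections (x :: x :: m)) (reflections (y :: y :: m)) :=
    hΦ.hurwitzEquiv_pair hm hpar (linearIndependent_get_cons.1 hli).2
      (listSpan_eq_of_hurwitzEquiv tails ▸ (linearIndependent_get_cons.1 hli').2)
      (hΦ.mem_integralSubsystem (List.forall_mem_cons.2 ⟨hy, hm⟩) hx
        (hgen_y ▸ sAff_mem_weylGroup hx))
      (hΦ.mem_integralSubsystem hxm hy (hgen ▸ sAff_mem_weylGroup hy))
  exact hequiv.trans <| heads.trans <| ((tails.cons _).cons _).trans hequiv'.symm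

theorem exists_reflections_eq_ofFn {k : ℕ} {t : Fin k → Equiv.Perm V}
    (ht : ∀ i, t i ∈ FinReflections Φ) :
    ∃ l : List V, (∀ x ∈ l, x ∈ Φ) ∧ reflections l = List.ofFn t ∧ l.length = k ∧
      reflectionGroup l = Subgroup.closure (Set.range t) := by
  obtain ⟨l, hl, heq⟩ := exists_reflections_eq (List.forall_mem_ofFn_iff.2 ht)
  refine ⟨l, hl, heq, ?_, ?_⟩
  · rw [← length_reflections, heq, List.length_ofFn]
  · simp only [reflectionGroup, heq, List.mem_ofFn]
    rfl

end Generating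

theorem statement_19_general (Φ : Set V) (hΦ : IsCrystRootSystem Φ)
    (n : ℕ) (hrank : Module.finrank ℝ V = n)
    (t r : Fin (n + 1) → Equiv.Perm V)
    (ht : ∀ i, t i ∈ FinReflections Φ) (hr : ∀ i, r i ∈ FinReflections Φ)
    (hprod : (List.ofFn t).prod = (List.ofFn r).prod)
    (htg : Subgroup.closure (Set.range t) = WeylGroup Φ)
    (hrg : Subgroup.closure (Set.range r) = WeylGroup Φ) :
    HurwitzEquiv (List.ofFn t) (List.ofFn r) := by
  obtain ⟨l, hl, hlt, hlen, hgen⟩ := exists_reflections_eq_ofFn ht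
  obtain ⟨l', hl', hlr, hlen', hgen'⟩ := exists_reflections_eq_ofFn hr
  rw [← hlt, ← hlr] at hprod ⊢
  exact hΦ.hurwitzEquiv_of_reflectionGroup_eq hl hl' (hrank ▸ hlen) (hrank ▸ hlen')
    (hgen.trans htg) (hgen'.trans hrg) hprod

theorem statement_19 (Φ : Set V) (hΦ : IsCrystRootSystem Φ) (hirr : IsIrreducibleRS Φ)
    (n : ℕ) (hrank : Module.finrank ℝ V = n)
    (w : Equiv.Perm V) (hw : w ∈ AffWeylGroup Φ) (hqc : IsQuasiCoxeterAff Φ n w)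
    (w' : Equiv.Perm V) (hw' : w' ∈ WeylGroup Φ)
    (hp : ∀ v : V, w' v = w v - w 0)
    (t r : Fin (n + 1) → Equiv.Perm V)
    (ht : ∀ i, t i ∈ FinReflections Φ) (hr : ∀ i, r i ∈ FinReflections Φ)
    (htp : (List.ofFn t).prod = w') (hrp : (List.ofFn r).prod = w')
    (htg : Subgroup.closure (Set.range t) = WeylGroup Φ)
    (hrg : Subgroup.closure (Set.range r) = WeylGroup Φ) :
    HurwitzEquiv (List.ofFn t) (List.ofFn r) := by
  exact statement_19_general Φ hΦ n hrank t r ht hr (htp.trans hrp.symm) htg hrg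

end
end
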